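/- L² energy estimate: let n be a nonnegative bounded solution of the Kompaneets equation with nonnegative initial data n₀ satisfying x² n₀(x) → 0 as x → ∞. Then for any t > s > 0: ∫₀^∞ n(x,t)² dx + ∫ₛᵗ ∫₀^∞ ( n(x,τ)² + x² (∂ₓ n(x,τ))² ) dx dτ ≤ ∫₀^∞ n(x,s)² dx + 2 ∫ₛᵗ ∫₀^∞ x n(x,τ)² dx dτ. -/

import Mathlib

/-!
Formally one multiplies the equation by `2 n` and integrates by parts: for `n²` it reads
`∂ₜ(n²) = x² ∂ₓ²(n²) + x² ∂ₓ(n²) + ∂ₓ((4/3) n³) + (4x - 4) n² - 2 x² (∂ₓn)²`, and integration in `x`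
turns the first two and the fourth terms into `∫ (2x - 2) n²`.

The derivatives in `IsKompSol` are only assumed to exist pointwise, with no joint continuity or
integrability, so neither differentiation under the integral sign nor Fubini for `∂ₜ n` is available.
Instead `n²` is replaced by its sup-convolution `u` in time (`supConv`). Since `u(·, t)` is touched from
below at each `x` by a translate of `n²(·, σ)` with `σ` near `t` (`supConv_touch`), the pointwise
equation makes `u` semiconvex in `x` and a subsolution, in the sense of difference quotients, of the
equation for `n²` up to `O(η)`, one of the two copies of `x² (∂ₓn)²` being spent on the error
(`exists_regularization`). Semiconvexity gives one-sided bounds, hence by dominated convergence the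
inequality integrated against a cutoff `φ` (`exists_reg_integral`), where summation by parts moves all
differences onto `φ` (`defect_by_parts`).

The surviving dissipation involves difference quotients of a step `h → 0`. By convexity these control
the quotients of a fixed step `H` that is a multiple of `h` (`coarse_le_fine`), and in the latter one
may pass to the limit `u → n²`. This is `cutoff_ineq`.

Last, the cutoff is removed (`energy_half`). Near `x = 0` the derivative `φ'` is nonnegative, so the
boundary term `-φ' n³` has the favourable sign there, and it is `O(1/k)` at infinity; the terms in `n²`
are dominated thanks to `x² n → 0`. Fatou's lemma recovers `x² (∂ₓn)²` from its coarse quotients.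
-/

open MeasureTheory Filter Set Real Topology

/-- The Kompaneets photon flux `J(x,u) = x² u'(x) + (x² - 2x) u(x) + u(x)²`. -/
noncomputable def kompFlux (u : ℝ → ℝ) (x : ℝ) : ℝ :=
  x ^ 2 * deriv u x + (x ^ 2 - 2 * x) * u x + u x ^ 2

/-- A (global-in-time) nonnegative solution of the Kompaneets equation
`∂ₜ n = ∂ₓ J(x, n(·,t))` on `(0,∞) × (0,∞)` with initial data `n₀`:
nonnegative, bounded, `C^{2,1}` in the interior, attaining the initial data,
continuous into `L¹`, and with `x² n → 0` and `x² ∂ₓ n → 0` as `x → ∞`,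
uniformly on the indicated time sets.  No boundary condition at `x = 0`. -/
structure IsKompSol (n : ℝ → ℝ → ℝ) (n₀ : ℝ → ℝ) : Prop where
  nonneg : ∀ x t : ℝ, 0 < x → 0 < t → 0 ≤ n x t
  bounded : ∃ M : ℝ, ∀ x t : ℝ, 0 < x → 0 < t → n x t ≤ M
  init : ∀ x : ℝ, 0 < x → n x 0 = n₀ x
  contOn : ContinuousOn (fun p : ℝ × ℝ => n p.1 p.2)
    ((Set.Ioi (0:ℝ)) ×ˢ (Set.Ioi (0:ℝ)))
  diff_x : ∀ t : ℝ, 0 < t → ∀ x : ℝ, 0 < x → DifferentiableAt ℝ (fun y => n y t) x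
  diff_xx : ∀ t : ℝ, 0 < t → ∀ x : ℝ, 0 < x →
    DifferentiableAt ℝ (deriv (fun y => n y t)) x
  diff_t : ∀ x : ℝ, 0 < x → ∀ t : ℝ, 0 < t → DifferentiableAt ℝ (fun τ => n x τ) t
  pde : ∀ x : ℝ, 0 < x → ∀ t : ℝ, 0 < t →
    deriv (fun τ => n x τ) t = deriv (fun y => kompFlux (fun z => n z t) y) x
  l1init : Filter.Tendsto (fun t => ∫ x in Set.Ioi (0:ℝ), |n x t - n₀ x|)
    (𝓝[>] (0:ℝ)) (nhds 0)
  decay : ∀ T : ℝ, 0 < T → ∀ ε : ℝ, 0 < ε → ∃ R : ℝ, 0 < R ∧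
    ∀ x : ℝ, R ≤ x → ∀ t : ℝ, 0 ≤ t → t < T → x ^ 2 * n x t < ε
  decay' : ∀ T : ℝ, 0 < T → ∀ ε : ℝ, 0 < ε → ∃ R : ℝ, 0 < R ∧
    ∀ x : ℝ, R ≤ x → ∀ t : ℝ, 1 / x ^ 2 ≤ t → t < T →
      |x ^ 2 * deriv (fun y => n y t) x| < ε


/-! ### Second differences and convexity -/

lemma tendsto_second_diff {f : ℝ → ℝ} {x q : ℝ}
    (hf : ∀ᶠ y in 𝓝 x, DifferentiableAt ℝ f y) (hq : HasDerivAt (deriv f) q x) :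
    Tendsto (fun h => (f (x + h) + f (x - h) - 2 * f x) / h ^ 2) (𝓝[>] 0) (𝓝 q) := by
  have hp : Tendsto (fun h : ℝ => x + h) (𝓝 0) (𝓝 x) := by
    have := (by fun_prop : Continuous fun h : ℝ => x + h).tendsto 0
    simpa using this
  have hm : Tendsto (fun h : ℝ => x - h) (𝓝 0) (𝓝 x) := by
    have := (by fun_prop : Continuous fun h : ℝ => x - h).tendsto 0
    simpa using this
  have hfx : ContinuousAt f x := hf.self_of_nhds.continuousAt
  refine HasDerivAt.lhopital_zero_nhdsGT (f' := fun h => deriv f (x + h) - deriv f (x - h))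
    (g' := fun h => 2 * h) ?_ ?_ ?_ ?_ ?_ ?_
  · refine Filter.Eventually.filter_mono nhdsWithin_le_nhds ?_
    filter_upwards [hp.eventually hf, hm.eventually hf] with h h1 h2
    have e1 : HasDerivAt (fun h => f (x + h)) (deriv f (x + h)) h := by
      simpa using h1.hasDerivAt.comp_const_add x h
    have e2 : HasDerivAt (fun h => f (x - h)) (-deriv f (x - h)) h := by
      simpa using h2.hasDerivAt.comp_const_sub x h
    simpa [sub_eq_add_neg] using (e1.add e2).sub_const (2 * f x)
  · exact Eventually.of_forall fun h => by simpa using hasDerivAt_pow 2 h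
  · filter_upwards [self_mem_nhdsWithin] with h hh
    have : (0:ℝ) < h := hh
    positivity
  · refine Tendsto.mono_left ?_ nhdsWithin_le_nhds
    have := ((hfx.tendsto.comp hp).add (hfx.tendsto.comp hm)).sub_const (2 * f x)
    simpa [two_mul, Function.comp_def] using this
  · refine Tendsto.mono_left ?_ nhdsWithin_le_nhds
    simpa using (continuous_pow 2 : Continuous fun h : ℝ => h ^ 2).tendsto 0
  · have k : HasDerivAt (fun h => deriv f (x + h) - deriv f (x - h)) (q + q) 0 := by
      have e1 : HasDerivAt (fun h => deriv f (x + h)) q 0 :=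
        HasDerivAt.comp_const_add x 0 (by simpa using hq)
      have e2 : HasDerivAt (fun h => deriv f (x - h)) (-q) 0 :=
        HasDerivAt.comp_const_sub x 0 (by simpa using hq)
      have := e1.fun_sub e2
      rwa [sub_neg_eq_add] at this
    have k2 := (hasDerivAt_iff_tendsto_slope_zero.1 k).mono_left
      (nhdsWithin_mono 0 (fun y (hy : 0 < y) => ne_of_gt hy))
    have k3 := k2.div_const 2
    rw [add_self_div_two] at k3
    refine k3.congr' ?_
    filter_upwards [self_mem_nhdsWithin] with h hh
    have : (0:ℝ) < h := hh
    simp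
    field_simp

/-- A continuous function whose second differences are eventually positive at every point is
convex: its excess over a chord has no positive interior maximum. -/
lemma convexOn_of_second_diff_pos {f : ℝ → ℝ} {a b : ℝ} (hc : ContinuousOn f (Ioo a b))
    (hf : ∀ z ∈ Ioo a b, ∀ᶠ r in 𝓝[>] (0:ℝ), 0 < f (z + r) + f (z - r) - 2 * f z) :
    ConvexOn ℝ (Ioo a b) f := by
  refine LinearOrder.convexOn_of_lt (convex_Ioo a b) ?_
  intro x hx y hy hxy p q hp hq hpq
  have hsub : Icc x y ⊆ Ioo a b := fun z hz => ⟨hx.1.trans_le hz.1, hz.2.trans_lt hy.2⟩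
  set m := (f y - f x) / (y - x) with hm
  set g : ℝ → ℝ := fun z => f z - (f x + m * (z - x)) with hg
  have hgc : ContinuousOn g (Icc x y) := by
    refine (hc.mono hsub).sub ?_
    fun_prop
  obtain ⟨z, hz, hzmax⟩ := isCompact_Icc.exists_isMaxOn (nonempty_Icc.2 hxy.le) hgc
  have hyx : y - x ≠ 0 := (sub_pos.2 hxy).ne'
  have gx : g x = 0 := by simp [hg]
  have gy : g y = 0 := by simp only [hg, hm]; field_simp; ring
  have hz0 : g z ≤ 0 := by
    by_contra hpos
    push Not at hpos
    have hzx : x < z := lt_of_le_of_ne hz.1 (by rintro rfl; linarith)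
    have hzy : z < y := lt_of_le_of_ne hz.2 (by rintro rfl; linarith)
    have e1 : ∀ᶠ r in 𝓝[>] (0:ℝ), r < z - x :=
      nhdsWithin_le_nhds (Iio_mem_nhds (by linarith))
    have e2 : ∀ᶠ r in 𝓝[>] (0:ℝ), r < y - z :=
      nhdsWithin_le_nhds (Iio_mem_nhds (by linarith))
    obtain ⟨r, ⟨hr1, hr2, hr3⟩, hr0⟩ :=
      (((hf z (hsub hz)).and (e1.and e2)).and self_mem_nhdsWithin).exists
    have hr0' : (0:ℝ) < r := hr0
    have m1 : g (z + r) ≤ g z := hzmax ⟨by linarith, by linarith⟩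
    have m2 : g (z - r) ≤ g z := hzmax ⟨by linarith, by linarith⟩
    simp only [hg] at m1 m2
    nlinarith
  have hmem : p • x + q • y ∈ Icc x y := by
    simp only [smul_eq_mul]
    have : p = 1 - q := by linarith
    subst this
    constructor <;> nlinarith
  have := (hzmax hmem).trans hz0
  simp only [hg, smul_eq_mul, hm] at this ⊢
  have e : (f y - f x) / (y - x) * (p * x + q * y - x) = q * (f y - f x) := by
    have : p = 1 - q := by linarith
    subst this
    field_simp
    ring
  have hp' : p = 1 - q := by linarith
  rw [e] at this
  subst hp'
  linarith

/-! ### Sup-convolution in time -/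

/-- Sup-convolution in the time variable: the supremum over `σ ∈ [T₀, T₁]` of
`v(x, σ) - K (t - σ)²`. -/
noncomputable def supConv (v : ℝ → ℝ → ℝ) (T₀ T₁ K x t : ℝ) : ℝ :=
  sSup ((fun σ => v x σ - K * (t - σ) ^ 2) '' Icc T₀ T₁)

section supConv
variable {v : ℝ → ℝ → ℝ} {T₀ T₁ K : ℝ}

lemma supConv_continuous (hv : Continuous fun p : ℝ × ℝ => v p.1 p.2) :
    Continuous fun p : ℝ × ℝ => supConv v T₀ T₁ K p.1 p.2 := by
  refine IsCompact.continuous_sSup (f := fun (p : ℝ × ℝ) σ => v p.1 σ - K * (p.2 - σ) ^ 2)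
    isCompact_Icc ?_
  have : Continuous fun q : (ℝ × ℝ) × ℝ => v q.1.1 q.2 :=
    hv.comp (by fun_prop : Continuous fun q : (ℝ × ℝ) × ℝ => (q.1.1, q.2))
  exact this.sub (by fun_prop)

lemma supConv_sect (hv : Continuous fun p : ℝ × ℝ => v p.1 p.2) (x t : ℝ) :
    ContinuousOn (fun σ => v x σ - K * (t - σ) ^ 2) (Icc T₀ T₁) := by
  have : Continuous fun σ => v x σ := hv.comp (by fun_prop : Continuous fun σ : ℝ => (x, σ))
  exact (this.sub (by fun_prop)).continuousOn

lemma le_supConv (hv : Continuous fun p : ℝ × ℝ => v p.1 p.2) (x t : ℝ) {σ : ℝ}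
    (hσ : σ ∈ Icc T₀ T₁) : v x σ - K * (t - σ) ^ 2 ≤ supConv v T₀ T₁ K x t :=
  le_csSup (isCompact_Icc.bddAbove_image (supConv_sect hv x t)) (mem_image_of_mem _ hσ)

lemma supConv_attained (hv : Continuous fun p : ℝ × ℝ => v p.1 p.2) (h : T₀ ≤ T₁) (x t : ℝ) :
    ∃ σ ∈ Icc T₀ T₁, supConv v T₀ T₁ K x t = v x σ - K * (t - σ) ^ 2 :=
  isCompact_Icc.exists_sSup_image_eq (nonempty_Icc.2 h) (supConv_sect hv x t)

/-- For `K` large, the maximising times in the sup-convolution are interior and so close to `t`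
that both the penalty and the change of `v` are at most `η`. -/
lemma supConv_close (hv : Continuous fun p : ℝ × ℝ => v p.1 p.2) {a b B d η : ℝ}
    (hB : ∀ x t, 0 ≤ v x t ∧ v x t ≤ B) (hd : 0 < d) (hη : 0 < η) :
    ∃ K : ℝ, 0 < K ∧ ∀ x ∈ Icc a b, ∀ t ∈ Icc (T₀ + d) (T₁ - d), ∀ σ ∈ Icc T₀ T₁,
      supConv v T₀ T₁ K x t = v x σ - K * (t - σ) ^ 2 →
        σ ∈ Ioo T₀ T₁ ∧ K * (t - σ) ^ 2 ≤ η ∧ v x σ ≤ v x t + η := by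
  have huc := (isCompact_Icc.prod isCompact_Icc :
    IsCompact (Icc a b ×ˢ Icc T₀ T₁)).uniformContinuousOn_of_continuous hv.continuousOn
  rw [Metric.uniformContinuousOn_iff] at huc
  obtain ⟨ρ, hρ, hu⟩ := huc η hη
  have hB0 : 0 ≤ B := (hB 0 0).1.trans (hB 0 0).2
  set r := min ρ d with hr
  have hr0 : 0 < r := lt_min hρ hd
  refine ⟨(B + 1) / r ^ 2, by positivity, ?_⟩
  intro x hx t ht σ hσ he
  have htI : t ∈ Icc T₀ T₁ := ⟨by linarith [ht.1], by linarith [ht.2]⟩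
  have h1 := le_supConv (K := (B + 1) / r ^ 2) hv x t htI
  rw [he] at h1
  simp only [sub_self, ne_eq, OfNat.ofNat_ne_zero, not_false_eq_true, zero_pow, mul_zero,
    sub_zero] at h1
  have h2 : (B + 1) / r ^ 2 * (t - σ) ^ 2 ≤ B := by linarith [(hB x σ).2, (hB x t).1]
  have h3 : (t - σ) ^ 2 < r ^ 2 := by
    rw [div_mul_eq_mul_div, div_le_iff₀ (by positivity)] at h2
    nlinarith [sq_nonneg (t - σ), pow_pos hr0 2]
  have h4 : |t - σ| < r := abs_lt_of_sq_lt_sq h3 hr0.le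
  obtain ⟨h5, h6⟩ := abs_lt.1 h4
  have hrd : r ≤ d := min_le_right _ _
  refine ⟨⟨by linarith [ht.1], by linarith [ht.2]⟩, ?_⟩
  have h7 := hu (x, σ) ⟨hx, hσ⟩ (x, t) ⟨hx, htI⟩ (by
    rw [Prod.dist_eq]
    simp only [dist_self]
    refine max_lt hρ ?_
    rw [Real.dist_eq, abs_sub_comm]
    exact h4.trans_le (min_le_left _ _))
  rw [Real.dist_eq] at h7
  simp only at h7
  constructor <;> linarith [(abs_lt.1 h7).2]

/-- The maximiser `σ` for time `t` is a competitor for time `t - h`, which bounds backward difference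
quotients from above. -/
lemma supConv_back (hv : Continuous fun p : ℝ × ℝ => v p.1 p.2) {x t σ h : ℝ}
    (hσ : σ ∈ Icc T₀ T₁) (he : supConv v T₀ T₁ K x t = v x σ - K * (t - σ) ^ 2) (hh : 0 < h) :
    (supConv v T₀ T₁ K x t - supConv v T₀ T₁ K x (t - h)) / h ≤ 2 * K * (σ - t) + K * h := by
  have := le_supConv (K := K) hv x (t - h) hσ
  rw [div_le_iff₀ hh]
  nlinarith

end supConv

/-! ### The equation at a touching point -/

/-- The restriction of `n` to the rectangle `[a, b] × [T₀, T₁]`, extended to the plane by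
projecting each coordinate to its interval. -/
noncomputable def clampN (n : ℝ → ℝ → ℝ) (a b T₀ T₁ x t : ℝ) : ℝ :=
  n (max a (min b x)) (max T₀ (min T₁ t))

lemma clampN_continuous {n : ℝ → ℝ → ℝ} {n₀ : ℝ → ℝ} (hsol : IsKompSol n n₀) {a b T₀ T₁ : ℝ}
    (ha : 0 < a) (hT : 0 < T₀) : Continuous fun p : ℝ × ℝ => clampN n a b T₀ T₁ p.1 p.2 := by
  have h1 : Continuous fun p : ℝ × ℝ => (max a (min b p.1), max T₀ (min T₁ p.2)) := by fun_prop
  exact hsol.contOn.comp_continuous h1 fun p =>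
    ⟨lt_of_lt_of_le ha (le_max_left _ _), lt_of_lt_of_le hT (le_max_left _ _)⟩

lemma clampN_eq (n : ℝ → ℝ → ℝ) {a b T₀ T₁ x t : ℝ} (hx : x ∈ Icc a b) (ht : t ∈ Icc T₀ T₁) :
    clampN n a b T₀ T₁ x t = n x t := by
  simp [clampN, hx.1, hx.2, ht.1, ht.2]

lemma clampN_bound {n : ℝ → ℝ → ℝ} {n₀ : ℝ → ℝ} (hsol : IsKompSol n n₀) {M : ℝ}
    (hM : ∀ x t : ℝ, 0 < x → 0 < t → n x t ≤ M) {a b T₀ T₁ : ℝ}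
    (ha : 0 < a) (hT : 0 < T₀) (x t : ℝ) :
    0 ≤ clampN n a b T₀ T₁ x t ∧ clampN n a b T₀ T₁ x t ≤ M :=
  ⟨hsol.nonneg _ _ (lt_of_lt_of_le ha (le_max_left _ _)) (lt_of_lt_of_le hT (le_max_left _ _)),
    hM _ _ (lt_of_lt_of_le ha (le_max_left _ _)) (lt_of_lt_of_le hT (le_max_left _ _))⟩

lemma komp_deriv {n : ℝ → ℝ → ℝ} {n₀ : ℝ → ℝ} (hsol : IsKompSol n n₀) {x σ : ℝ}
    (hx : 0 < x) (hσ : 0 < σ) :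
    deriv (fun τ => n x τ) σ =
      x ^ 2 * deriv (deriv (fun y => n y σ)) x + x ^ 2 * deriv (fun y => n y σ) x
        + 2 * n x σ * deriv (fun y => n y σ) x + (2 * x - 2) * n x σ := by
  rw [hsol.pde x hx σ hσ]
  have h1 := (hsol.diff_x σ hσ x hx).hasDerivAt
  have h2 := (hsol.diff_xx σ hσ x hx).hasDerivAt
  have h3 : HasDerivAt (fun y : ℝ => y ^ 2) (2 * x) x := by simpa using hasDerivAt_pow 2 x
  have h4 : HasDerivAt (fun y : ℝ => y ^ 2 - 2 * y) (2 * x - 2) x := by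
    have := h3.fun_sub ((hasDerivAt_id' x).const_mul 2)
    simpa using this
  have h5 := ((h3.fun_mul h2).fun_add (h4.fun_mul h1)).fun_add (h1.fun_pow 2)
  have h6 : deriv (fun y => kompFlux (fun z => n z σ) y) x = _ := h5.deriv
  rw [h6]
  simp
  ring

/-- The sup-convolution `u` of `n²` is touched from below at `(x, t)` by a vertical translate of
`n²(·, σ)`, where `σ` is a maximiser. With `P = ∂ₓn` and `Q = ∂ₓ²n` at `(x, σ)`, the equation at
`(x, σ)` thus controls the one-sided derivatives of `u` at `(x, t)`. -/
lemma supConv_touch {n : ℝ → ℝ → ℝ} {n₀ : ℝ → ℝ} (hsol : IsKompSol n n₀) {a b T₀ T₁ K x t σ : ℝ}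
    (ha : 0 < a) (hT : 0 < T₀) (hx : x ∈ Ioo a b) (hσ : σ ∈ Ioo T₀ T₁)
    {u : ℝ → ℝ → ℝ} (hu : u = supConv (fun x t => clampN n a b T₀ T₁ x t ^ 2) T₀ T₁ K)
    (he : u x t = n x σ ^ 2 - K * (t - σ) ^ 2) :
    ∃ P Q : ℝ,
      2 * n x σ * (x ^ 2 * Q + x ^ 2 * P + 2 * n x σ * P + (2 * x - 2) * n x σ)
        = 2 * K * (σ - t) ∧
      (∀ ε > 0, ∀ᶠ h in 𝓝[>] (0:ℝ),
        2 * P ^ 2 + 2 * n x σ * Q - ε ≤ (u (x + h) t + u (x - h) t - 2 * u x t) / h ^ 2) ∧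
      ∀ d, HasDerivAt (fun y => u y t) d x → d = 2 * n x σ * P := by
  have hx0 : 0 < x := ha.trans hx.1
  have hσ0 : 0 < σ := hT.trans hσ.1
  have hv : Continuous fun p : ℝ × ℝ => (fun x t => clampN n a b T₀ T₁ x t ^ 2) p.1 p.2 :=
    (clampN_continuous hsol ha hT).pow 2
  have hge : ∀ y ∈ Icc a b, ∀ τ ∈ Icc T₀ T₁, n y τ ^ 2 - K * (t - τ) ^ 2 ≤ u y t := by
    intro y hy τ hτ
    have := le_supConv (v := fun x t => clampN n a b T₀ T₁ x t ^ 2) (K := K) hv y t hτ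
    simp only [clampN_eq n hy hτ] at this
    rw [hu]
    exact this
  have hσI : σ ∈ Icc T₀ T₁ := Ioo_subset_Icc_self hσ
  set P := deriv (fun y => n y σ) x with hP
  set Q := deriv (deriv (fun y => n y σ)) x with hQ
  have hd : ∀ y, 0 < y → HasDerivAt (fun y => n y σ ^ 2)
      (2 * n y σ * deriv (fun y => n y σ) y) y := by
    intro y hy
    simpa using (hsol.diff_x σ hσ0 y hy).hasDerivAt.fun_pow 2
  have hnhds : ∀ᶠ y in 𝓝 x, y ∈ Icc a b := Icc_mem_nhds hx.1 hx.2
  refine ⟨P, Q, ?_, ?_, ?_⟩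
  · have hmax : IsLocalMax (fun τ => n x τ ^ 2 - K * (t - τ) ^ 2) σ := by
      filter_upwards [Icc_mem_nhds hσ.1 hσ.2] with τ hτ
      rw [← he]
      exact hge x (Ioo_subset_Icc_self hx) τ hτ
    have h1 := (hsol.diff_t x hx0 σ hσ0).hasDerivAt.fun_pow 2
    have h2 : HasDerivAt (fun τ : ℝ => K * (t - τ) ^ 2) (K * (2 * (t - σ) * (-1))) σ := by
      have := (((hasDerivAt_id' σ).const_sub t).fun_pow 2).const_mul K
      simpa using this
    have h3 := hmax.hasDerivAt_eq_zero (h1.fun_sub h2)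
    rw [komp_deriv hsol hx0 hσ0] at h3
    simp only [Nat.cast_ofNat, Nat.add_one_sub_one, pow_one] at h3
    linarith
  · intro ε hε
    have h1 : HasDerivAt (deriv fun y => n y σ ^ 2) (2 * P ^ 2 + 2 * n x σ * Q) x := by
      have h2 : HasDerivAt (fun y => 2 * n y σ * deriv (fun y => n y σ) y)
          (2 * P * P + 2 * n x σ * Q) x :=
        (((hsol.diff_x σ hσ0 x hx0).hasDerivAt.const_mul 2).fun_mul
          (hsol.diff_xx σ hσ0 x hx0).hasDerivAt)
      have h3 : 2 * P ^ 2 + 2 * n x σ * Q = 2 * P * P + 2 * n x σ * Q := by ring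
      rw [h3]
      refine h2.congr_of_eventuallyEq ?_
      filter_upwards [Ioi_mem_nhds hx0] with y hy
      exact (hd y hy).deriv
    have h2 : ∀ᶠ y in 𝓝 x, DifferentiableAt ℝ (fun y => n y σ ^ 2) y := by
      filter_upwards [Ioi_mem_nhds hx0] with y hy
      exact (hd y hy).differentiableAt
    have h3 := (tendsto_second_diff h2 h1).eventually_const_le
      (show 2 * P ^ 2 + 2 * n x σ * Q - ε < 2 * P ^ 2 + 2 * n x σ * Q by linarith)
    have e1 : ∀ᶠ r in 𝓝[>] (0:ℝ), r < x - a :=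
      nhdsWithin_le_nhds (Iio_mem_nhds (by linarith [hx.1]))
    have e2 : ∀ᶠ r in 𝓝[>] (0:ℝ), r < b - x :=
      nhdsWithin_le_nhds (Iio_mem_nhds (by linarith [hx.2]))
    filter_upwards [h3, e1, e2, self_mem_nhdsWithin] with h h3 h4 h5 h6
    have h6 : 0 < h := h6
    refine h3.trans ?_
    have k1 := hge (x + h) ⟨by linarith [hx.1], by linarith⟩ σ hσI
    have k2 := hge (x - h) ⟨by linarith, by linarith [hx.2]⟩ σ hσI
    gcongr ?_ / h ^ 2
    linarith
  · intro d hd'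
    have hmin : IsLocalMin (fun y => u y t - n y σ ^ 2) x := by
      filter_upwards [hnhds] with y hy
      have := hge y hy σ hσI
      linarith
    have := hmin.hasDerivAt_eq_zero (hd'.fun_sub (hd x hx0))
    linarith

/-! ### The regularised subsolution -/

/-- Read with `ν = n`, `P = ∂ₓn`, `Q = ∂ₓ²n` and `κ = ∂ₜ(n²)`: where `∂ₜ(n²)` is bounded, the equation
bounds `∂ₓ²(n²) = 2 P² + 2 ν Q` from below, since the `P²` absorbs the terms linear in `P`. -/
lemma second_diff_lower {ν P Q x a b M κ D : ℝ} (ha : 0 < a) (hx : x ∈ Ioo a b)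
    (hν : 0 ≤ ν) (hνM : ν ≤ M) (hκ : |κ| ≤ D)
    (h : 2 * ν * (x ^ 2 * Q + x ^ 2 * P + 2 * ν * P + (2 * x - 2) * ν) = κ) :
    -(((M * (b ^ 2 + 2 * M)) ^ 2 / (2 * a ^ 2) + 4 * b * M ^ 2 + D) / a ^ 2)
      ≤ 2 * P ^ 2 + 2 * ν * Q := by
  have hx0 : 0 < x := ha.trans hx.1
  have hM : 0 ≤ M := hν.trans hνM
  have hb : 0 < b := hx0.trans hx.2
  have hxa : a ^ 2 ≤ x ^ 2 := by have := hx.1; gcongr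
  have hD := (abs_le.1 hκ).1
  have hD0 : 0 ≤ D := (abs_nonneg _).trans hκ
  set C := (M * (b ^ 2 + 2 * M)) ^ 2 / (2 * a ^ 2) + 4 * b * M ^ 2 + D with hC
  have hC0 : 0 ≤ C := by positivity
  have h1 : -C ≤ x ^ 2 * (2 * P ^ 2 + 2 * ν * Q) := by
    have e : x ^ 2 * (2 * P ^ 2 + 2 * ν * Q)
        = 2 * x ^ 2 * P ^ 2 - 2 * (ν * (x ^ 2 + 2 * ν)) * P - (4 * x - 4) * ν ^ 2 + κ := by
      rw [← h]; ring
    set R := ν * (x ^ 2 + 2 * ν) with hR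
    have hR2 : R ^ 2 ≤ (M * (b ^ 2 + 2 * M)) ^ 2 := by
      have : x ≤ b := hx.2.le
      rw [hR]
      gcongr
    have h2 : R ^ 2 / (2 * x ^ 2) ≤ (M * (b ^ 2 + 2 * M)) ^ 2 / (2 * a ^ 2) := by gcongr
    have h3 : -(R ^ 2 / (2 * x ^ 2)) ≤ 2 * x ^ 2 * P ^ 2 - 2 * R * P := by
      have : 2 * x ^ 2 * P ^ 2 - 2 * R * P + R ^ 2 / (2 * x ^ 2)
        = 2 * x ^ 2 * (P - R / (2 * x ^ 2)) ^ 2 := by field_simp; ring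
      have h4 : 0 ≤ 2 * x ^ 2 * (P - R / (2 * x ^ 2)) ^ 2 := by positivity
      linarith
    have h4 : (4 * x - 4) * ν ^ 2 ≤ 4 * b * M ^ 2 := by
      have : x ≤ b := hx.2.le
      calc (4 * x - 4) * ν ^ 2 ≤ 4 * b * ν ^ 2 := by gcongr; linarith
        _ ≤ 4 * b * M ^ 2 := by gcongr
    rw [e, hC]
    linarith
  have h2 : -C / x ^ 2 ≤ 2 * P ^ 2 + 2 * ν * Q := by
    rw [div_le_iff₀ (by positivity)]
    linarith
  refine le_trans ?_ h2
  rw [neg_div, neg_le_neg_iff]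
  gcongr

/-- The equation for `n²` at a touching time, with `ν, P, Q` the value and space derivatives of `n`
there and `κ` its `∂ₜ(n²)`, rewritten in terms of the value `w = ν² - e` and derivative `d` of the
sup-convolution. The penalty `e` costs `O(η)`, because one of the two copies of `x² P²` absorbs the
error in the transport term. -/
lemma touch_algebra {ν P Q x a b M κ e η w d : ℝ} (ha : 0 < a) (hx : x ∈ Ioo a b)
    (hν : 0 ≤ ν) (hνM : ν ≤ M) (he : 0 ≤ e) (heη : e ≤ η) (hη : 0 < η) (hw : 0 ≤ w)
    (hwe : w = ν ^ 2 - e) (hd : d = 2 * ν * P)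
    (h : 2 * ν * (x ^ 2 * Q + x ^ 2 * P + 2 * ν * P + (2 * x - 2) * ν) = κ) :
    κ - x ^ 2 * (2 * P ^ 2 + 2 * ν * Q) ≤ x ^ 2 * d + 2 * √w * d + (4 * x - 4) * w
      - x ^ 2 * (d ^ 2 / (4 * (w + η))) + (4 * M ^ 2 / a ^ 2 + 4 * b) * η := by
  have hx0 : 0 < x := ha.trans hx.1
  have hb : 0 < b := hx0.trans hx.2
  set r := √w with hr
  have hr0 : 0 ≤ r := Real.sqrt_nonneg _
  have hr2 : r ^ 2 = w := Real.sq_sqrt hw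
  have hrν : r ≤ ν := by
    apply abs_le_of_sq_le_sq' _ hν |>.2
    linarith
  have h1 : x ^ 2 * (d ^ 2 / (4 * (w + η))) ≤ x ^ 2 * P ^ 2 := by
    gcongr
    rw [div_le_iff₀ (by positivity), hd]
    nlinarith [sq_nonneg P, mul_nonneg (sq_nonneg P) (sub_nonneg.2 heη)]
  have h2 : (ν - r) ^ 2 ≤ η := by nlinarith
  have h3 : 4 * (ν - r) * ν * P - x ^ 2 * P ^ 2 ≤ 4 * M ^ 2 / a ^ 2 * η := by
    have e1 : 4 * (ν - r) * ν * P - x ^ 2 * P ^ 2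
        = 4 * (ν - r) ^ 2 * ν ^ 2 / x ^ 2 - (x * P - 2 * (ν - r) * ν / x) ^ 2 := by
      field_simp; ring
    have e2 : 4 * (ν - r) ^ 2 * ν ^ 2 / x ^ 2 ≤ 4 * η * M ^ 2 / a ^ 2 := by
      have := hx.1.le
      gcongr
    have e3 : 4 * η * M ^ 2 / a ^ 2 = 4 * M ^ 2 / a ^ 2 * η := by ring
    nlinarith [sq_nonneg (x * P - 2 * (ν - r) * ν / x)]
  have h4 : (4 * x - 4) * e ≤ 4 * b * η := by
    have := hx.2.le
    calc (4 * x - 4) * e ≤ 4 * b * e := by gcongr; linarith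
      _ ≤ 4 * b * η := by gcongr
  have e4 : κ - x ^ 2 * (2 * P ^ 2 + 2 * ν * Q)
      = x ^ 2 * d + 2 * r * d + (4 * x - 4) * w + (4 * (ν - r) * ν * P - x ^ 2 * P ^ 2)
        - x ^ 2 * P ^ 2 + (4 * x - 4) * e := by
    rw [← h, hd, hwe]; ring
  rw [e4]
  linarith

/-- A regularisation of `n²` from above: uniformly close to `n²`, locally semiconvex and Lipschitz
in `x`, with backward time quotients bounded above, and still a subsolution, up to `O(η)`, of the
equation for `n²`; half of the dissipation `2 x² (∂ₓ n)²` is used to absorb the error. -/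
lemma exists_regularization {n : ℝ → ℝ → ℝ} {n₀ : ℝ → ℝ} (hsol : IsKompSol n n₀) {M : ℝ}
    (hM : ∀ x t : ℝ, 0 < x → 0 < t → n x t ≤ M) {a b T₀ T₁ d δ η : ℝ}
    (ha : 0 < a) (hT : 0 < T₀) (hTT : T₀ ≤ T₁) (hd : 0 < d) (hδ : 0 < δ) (hη : 0 < η) :
    ∃ u : ℝ → ℝ → ℝ, (Continuous fun p : ℝ × ℝ => u p.1 p.2) ∧
      (∀ x ∈ Icc a b, ∀ t ∈ Icc (T₀ + d) (T₁ - d), n x t ^ 2 ≤ u x t ∧ u x t ≤ n x t ^ 2 + η) ∧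
      (∃ L, ∀ x ∈ Icc a b, ∀ t ∈ Icc (T₀ + d) (T₁ - d), ∀ h, 0 < h → h ≤ 1 →
        (u x t - u x (t - h)) / h ≤ L) ∧
      (∃ C, ∀ t ∈ Icc (T₀ + d) (T₁ - d), ∀ x h, 0 < h → a < x - h → x + h < b →
        -C ≤ (u (x + h) t + u (x - h) t - 2 * u x t) / h ^ 2) ∧
      (∃ Λ, ∀ t ∈ Icc (T₀ + d) (T₁ - d), ∀ x ∈ Icc (a + δ) (b - δ), ∀ y ∈ Icc (a + δ) (b - δ),
        |u x t - u y t| ≤ Λ * |x - y|) ∧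
      (∀ t ∈ Icc (T₀ + d) (T₁ - d), ∀ x ∈ Ioo a b, ∀ p, HasDerivAt (fun y => u y t) p x →
        ∀ ε > 0, ∀ᶠ h in 𝓝[>] (0:ℝ),
          (u x t - u x (t - h)) / h - x ^ 2 * ((u (x + h) t + u (x - h) t - 2 * u x t) / h ^ 2)
          ≤ x ^ 2 * p + 2 * √(u x t) * p + (4 * x - 4) * u x t
            - x ^ 2 * (p ^ 2 / (4 * (u x t + η))) + (4 * M ^ 2 / a ^ 2 + 4 * b) * η + ε) := by
  have hv : Continuous fun p : ℝ × ℝ => (fun x t => clampN n a b T₀ T₁ x t ^ 2) p.1 p.2 :=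
    (clampN_continuous hsol ha hT).pow 2
  have hvb : ∀ x t, 0 ≤ clampN n a b T₀ T₁ x t ^ 2 ∧ clampN n a b T₀ T₁ x t ^ 2 ≤ M ^ 2 := by
    intro x t
    obtain ⟨h1, h2⟩ := clampN_bound hsol hM (b := b) (T₁ := T₁) ha hT x t
    exact ⟨by positivity, by gcongr⟩
  obtain ⟨K, hK, hclose⟩ := supConv_close (v := fun x t => clampN n a b T₀ T₁ x t ^ 2)
    (T₀ := T₀) (T₁ := T₁) (a := a) (b := b) hv hvb hd hη
  set u := supConv (fun x t => clampN n a b T₀ T₁ x t ^ 2) T₀ T₁ K with hu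
  have huc : Continuous fun p : ℝ × ℝ => u p.1 p.2 := supConv_continuous hv
  have hJ : ∀ t ∈ Icc (T₀ + d) (T₁ - d), t ∈ Icc T₀ T₁ := fun t ht =>
    ⟨by linarith [ht.1], by linarith [ht.2]⟩
  have hatt : ∀ x ∈ Icc a b, ∀ t ∈ Icc (T₀ + d) (T₁ - d), ∃ σ ∈ Ioo T₀ T₁,
      u x t = n x σ ^ 2 - K * (t - σ) ^ 2 ∧ K * (t - σ) ^ 2 ≤ η ∧
      n x σ ^ 2 ≤ n x t ^ 2 + η ∧
      ∀ h, 0 < h → (u x t - u x (t - h)) / h ≤ 2 * K * (σ - t) + K * h := by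
    intro x hx t ht
    obtain ⟨σ, hσ, he⟩ := supConv_attained
      (v := fun x t => clampN n a b T₀ T₁ x t ^ 2) (K := K) hv hTT x t
    obtain ⟨h1, h2, h3⟩ := hclose x hx t ht σ hσ he
    rw [clampN_eq n hx hσ, clampN_eq n hx (hJ t ht)] at h3
    refine ⟨σ, h1, ?_, h2, h3, fun h hh => supConv_back hv hσ he hh⟩
    rw [clampN_eq n hx hσ] at he
    exact he
  have hlow : ∀ x ∈ Icc a b, ∀ t ∈ Icc (T₀ + d) (T₁ - d), n x t ^ 2 ≤ u x t := by
    intro x hx t ht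
    have := le_supConv (v := fun x t => clampN n a b T₀ T₁ x t ^ 2) (K := K) hv x t (hJ t ht)
    rw [clampN_eq n hx (hJ t ht)] at this
    simpa using this
  have hup : ∀ x ∈ Icc a b, ∀ t ∈ Icc (T₀ + d) (T₁ - d), u x t ≤ n x t ^ 2 + η := by
    intro x hx t ht
    obtain ⟨σ, hσ, he, -, h3, -⟩ := hatt x hx t ht
    have : 0 ≤ K * (t - σ) ^ 2 := by positivity
    linarith
  have hupM : ∀ x ∈ Icc a b, ∀ t ∈ Icc (T₀ + d) (T₁ - d), u x t ≤ M ^ 2 := by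
    intro x hx t ht
    obtain ⟨σ, hσ, he, -⟩ := hatt x hx t ht
    have h1 := hM x σ (ha.trans_le hx.1) (hT.trans hσ.1)
    have h0 := hsol.nonneg x σ (ha.trans_le hx.1) (hT.trans hσ.1)
    have : n x σ ^ 2 ≤ M ^ 2 := by gcongr
    have : 0 ≤ K * (t - σ) ^ 2 := by positivity
    linarith
  have hu0 : ∀ x ∈ Icc a b, ∀ t ∈ Icc (T₀ + d) (T₁ - d), 0 ≤ u x t := fun x hx t ht =>
    (sq_nonneg _).trans (hlow x hx t ht)
  -- the second differences are bounded below at each point, hence `u` is semiconvex in `x`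
  obtain ⟨C, hC0, hC⟩ : ∃ C, 0 ≤ C ∧ ∀ t ∈ Icc (T₀ + d) (T₁ - d),
      ConvexOn ℝ (Ioo a b) (fun z => u z t + C / 2 * z ^ 2) := by
    set C₀ := ((M * (b ^ 2 + 2 * M)) ^ 2 / (2 * a ^ 2) + 4 * b * M ^ 2
      + 2 * K * (T₁ - T₀)) / a ^ 2 with hC₀
    refine ⟨max (C₀ + 2) 0, le_max_right _ _, fun t ht => convexOn_of_second_diff_pos ?_ ?_⟩
    · have : Continuous fun z => u z t := huc.comp (by fun_prop : Continuous fun z : ℝ => (z, t))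
      exact (this.add (by fun_prop)).continuousOn
    · intro z hz
      have hz' := Ioo_subset_Icc_self hz
      obtain ⟨σ, hσ, he, -⟩ := hatt z hz' t ht
      obtain ⟨P, Q, h1, h2, -⟩ := supConv_touch hsol ha hT hz hσ hu he
      have htI := hJ t ht
      have h3 := second_diff_lower (D := 2 * K * (T₁ - T₀)) ha hz
        (hsol.nonneg z σ (ha.trans hz.1) (hT.trans hσ.1))
        (hM z σ (ha.trans hz.1) (hT.trans hσ.1)) (by
          rw [abs_mul, abs_of_pos (by positivity : 0 < 2 * K)]
          gcongr
          rw [abs_le]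
          constructor <;> linarith [hσ.1, hσ.2, htI.1, htI.2]) h1
      filter_upwards [h2 1 one_pos, self_mem_nhdsWithin] with h h4 h5
      have h5 : 0 < h := h5
      rw [le_div_iff₀ (by positivity)] at h4
      have h6 : (-(C₀ + 2) + 1) * h ^ 2 ≤ (2 * P ^ 2 + 2 * n z σ * Q - 1) * h ^ 2 := by
        gcongr
        linarith
      have h7 : (C₀ + 2) * h ^ 2 ≤ max (C₀ + 2) 0 * h ^ 2 := by
        gcongr
        exact le_max_left _ _
      nlinarith [pow_pos h5 2]
  refine ⟨u, huc, fun x hx t ht => ⟨hlow x hx t ht, hup x hx t ht⟩, ?_, ?_, ?_, ?_⟩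
  · refine ⟨2 * K * (T₁ - T₀) + K, fun x hx t ht h h0 h1 => ?_⟩
    obtain ⟨σ, hσ, -, -, -, h2⟩ := hatt x hx t ht
    refine (h2 h h0).trans ?_
    have h3 : σ - t ≤ T₁ - T₀ := by linarith [hσ.2, (hJ t ht).1]
    have h4 : 2 * K * (σ - t) ≤ 2 * K * (T₁ - T₀) := by gcongr
    nlinarith
  · refine ⟨C, fun t ht x h hh h1 h2 => ?_⟩
    have h3 := (hC t ht).2 (⟨by linarith, h2⟩ : x + h ∈ Ioo a b) (⟨h1, by linarith⟩ : x - h ∈ Ioo a b)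
      (by norm_num : (0:ℝ) ≤ 1 / 2) (by norm_num : (0:ℝ) ≤ 1 / 2) (by norm_num)
    have h4 : (1 / 2 : ℝ) • (x + h) + (1 / 2 : ℝ) • (x - h) = x := by
      simp only [smul_eq_mul]; ring
    rw [h4] at h3
    simp only [smul_eq_mul] at h3
    rw [le_div_iff₀ (by positivity)]
    nlinarith
  · set B := M ^ 2 + C / 2 * b ^ 2 with hB
    refine ⟨(2 * B / (δ / 2)).toNNReal + C * b, fun t ht x hx y hy => ?_⟩
    have hball : Ioo a b = Metric.ball ((a + b) / 2) ((b - a) / 2) := Real.Ioo_eq_ball a b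
    have hconv := hC t ht
    rw [hball] at hconv
    have hlip := hconv.lipschitzOnWith_of_abs_le (half_pos hδ) (M := B) (by
      intro z hz
      have hz : z ∈ Ioo a b := by rw [hball]; exact hz
      have hz' := Ioo_subset_Icc_self hz
      have h1 := hu0 z hz' t ht
      have h2 := hupM z hz' t ht
      have h3 : 0 < z := ha.trans hz.1
      have h4 : C / 2 * z ^ 2 ≤ C / 2 * b ^ 2 := by
        have := hz.2.le
        gcongr
      rw [abs_of_nonneg (by positivity)]
      linarith)
    have hmem : ∀ z ∈ Icc (a + δ) (b - δ), z ∈ Metric.ball ((a + b) / 2) ((b - a) / 2 - δ / 2) := by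
      intro z hz
      rw [Metric.mem_ball, Real.dist_eq, abs_lt]
      constructor <;> linarith [hz.1, hz.2]
    have h1 := hlip.dist_le_mul x (hmem x hx) y (hmem y hy)
    rw [Real.dist_eq, Real.dist_eq] at h1
    have h2 : u x t - u y t = (u x t + C / 2 * x ^ 2 - (u y t + C / 2 * y ^ 2))
        - C / 2 * (x + y) * (x - y) := by ring
    have hx0 : 0 < x := by linarith [hx.1]
    have hy0 : 0 < y := by linarith [hy.1]
    have h3 : |C / 2 * (x + y) * (x - y)| ≤ C * b * |x - y| := by
      rw [abs_mul, abs_of_nonneg (by positivity)]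
      have : C * (x + y) ≤ C * (b + b) := by
        gcongr <;> linarith [hx.2, hy.2]
      refine mul_le_mul_of_nonneg_right ?_ (abs_nonneg _)
      linarith
    rw [h2, add_mul]
    exact (abs_sub _ _).trans (add_le_add h1 h3)
  · intro t ht x hx p hp ε hε
    have hx' := Ioo_subset_Icc_self hx
    obtain ⟨σ, hσ, he, heη, -, hback⟩ := hatt x hx' t ht
    obtain ⟨P, Q, h1, h2, h3⟩ := supConv_touch hsol ha hT hx hσ hu he
    have hx0 : 0 < x := ha.trans hx.1
    have h4 := touch_algebra (e := K * (t - σ) ^ 2) ha hx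
        (hsol.nonneg x σ (ha.trans hx.1) (hT.trans hσ.1))
        (hM x σ (ha.trans hx.1) (hT.trans hσ.1)) (by positivity) heη hη (hu0 x hx' t ht) he
        (h3 p hp) h1
    have e1 : ∀ᶠ h in 𝓝[>] (0:ℝ), K * h < ε / 2 := by
      have : ∀ᶠ h in 𝓝[>] (0:ℝ), h < ε / 2 / K :=
        nhdsWithin_le_nhds (Iio_mem_nhds (by positivity))
      filter_upwards [this] with h hh
      rw [lt_div_iff₀ hK] at hh
      linarith
    filter_upwards [h2 (ε / 2 / x ^ 2) (by positivity), e1, self_mem_nhdsWithin] with h k1 k2 k3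
    have k4 := hback h k3
    have k5 := mul_le_mul_of_nonneg_left k1 (sq_nonneg x)
    have k6 : x ^ 2 * (2 * P ^ 2 + 2 * n x σ * Q - ε / 2 / x ^ 2)
      = x ^ 2 * (2 * P ^ 2 + 2 * n x σ * Q) - ε / 2 := by field_simp
    linarith

/-! ### Integrals over a strip and the finite-difference defect -/

/-- Lebesgue measure on the strip `s < τ ≤ t`, in the variables `(τ, x)`. -/
noncomputable def stripMeas (s t : ℝ) : Measure (ℝ × ℝ) :=
  (volume.restrict (Ioc s t)).prod volume

lemma ae_strip (s t : ℝ) : ∀ᵐ p ∂stripMeas s t, p.1 ∈ Ioc s t := by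
  have h : MeasurableSet {p : ℝ × ℝ | p.1 ∈ Ioc s t} := measurable_fst measurableSet_Ioc
  rw [stripMeas, Measure.ae_prod_iff_ae_ae h]
  filter_upwards [ae_restrict_mem measurableSet_Ioc] with x hx
  exact Eventually.of_forall fun _ => hx

lemma strip_bound_integrable (s t a b B : ℝ) :
    Integrable (fun p : ℝ × ℝ => (Icc a b).indicator (fun _ => B) p.2) (stripMeas s t) := by
  have h : Integrable ((Icc a b).indicator (fun _ : ℝ => B)) volume :=
    (integrable_indicator_iff measurableSet_Icc).2 (by simp)
  exact h.comp_snd _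

lemma strip_integrable {s t a b B : ℝ} {F : ℝ × ℝ → ℝ}
    (hF : AEStronglyMeasurable F (stripMeas s t))
    (hB : ∀ p : ℝ × ℝ, p.1 ∈ Ioc s t → p.2 ∈ Icc a b → |F p| ≤ B)
    (h0 : ∀ p : ℝ × ℝ, p.2 ∉ Icc a b → F p = 0) : Integrable F (stripMeas s t) := by
  refine (strip_bound_integrable s t a b B).mono' hF ?_
  filter_upwards [ae_strip s t] with p hp
  by_cases h : p.2 ∈ Icc a b
  · simpa [indicator_of_mem h] using hB p hp h
  · simp [indicator_of_notMem h, h0 p h]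

lemma strip_integrable_cont {s t a b : ℝ} {F : ℝ × ℝ → ℝ} (hF : Continuous F)
    (h0 : ∀ p : ℝ × ℝ, p.2 ∉ Icc a b → F p = 0) : Integrable F (stripMeas s t) := by
  obtain ⟨B, hB⟩ := ((isCompact_Icc (a := s) (b := t)).prod (isCompact_Icc (a := a) (b := b))
    ).exists_bound_of_continuousOn hF.continuousOn
  exact strip_integrable (B := B) hF.aestronglyMeasurable
    (fun p h1 h2 => hB p ⟨Ioc_subset_Icc_self h1, h2⟩) h0

lemma strip_tendsto {s t a b B : ℝ} {F : ℕ → ℝ × ℝ → ℝ} {f : ℝ × ℝ → ℝ}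
    (hF : ∀ k, AEStronglyMeasurable (F k) (stripMeas s t))
    (hB : ∀ᶠ k in atTop, ∀ p : ℝ × ℝ, p.1 ∈ Ioc s t → p.2 ∈ Icc a b → |F k p| ≤ B)
    (h0 : ∀ᶠ k in atTop, ∀ p : ℝ × ℝ, p.2 ∉ Icc a b → F k p = 0)
    (hlim : ∀ᵐ p ∂stripMeas s t, Tendsto (fun k => F k p) atTop (𝓝 (f p))) :
    Tendsto (fun k => ∫ p, F k p ∂stripMeas s t) atTop (𝓝 (∫ p, f p ∂stripMeas s t)) := by
  refine tendsto_integral_filter_of_dominated_convergence _ (Eventually.of_forall hF) ?_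
    (strip_bound_integrable s t a b B) hlim
  filter_upwards [hB, h0] with k hB h0
  filter_upwards [ae_strip s t] with p hp
  by_cases h : p.2 ∈ Icc a b
  · simpa [indicator_of_mem h] using hB p hp h
  · simp [indicator_of_notMem h, h0 p h]

lemma strip_shift (s t h : ℝ) (F : ℝ × ℝ → ℝ) :
    ∫ p, F (p.1, p.2 + h) ∂stripMeas s t = ∫ p, F p ∂stripMeas s t := by
  have hm : MeasurePreserving (Prod.map id (fun x : ℝ => x + h)) (stripMeas s t) (stripMeas s t) :=
    (MeasurePreserving.id _).prod (measurePreserving_add_right volume h)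
  have he : MeasurableEmbedding (Prod.map id (fun x : ℝ => x + h) : ℝ × ℝ → ℝ × ℝ) :=
    ((Homeomorph.refl ℝ).prodCongr (Homeomorph.addRight h)).measurableEmbedding
  exact hm.integral_comp he F

/-- `Φ(y) = (4/3) y^(3/2)`, so that `Φ(n²) = (4/3) n³`, the flux of the nonlinear term in the
equation for `n²`. -/
noncomputable def Phi (y : ℝ) : ℝ := 4 / 3 * y ^ (3 / 2 : ℝ)

lemma Phi_hasDerivAt (y : ℝ) : HasDerivAt Phi (2 * √y) y := by
  have := (Real.hasDerivAt_rpow_const (x := y) (p := 3 / 2) (Or.inr (by norm_num))).const_mul (4 / 3)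
  have e : 4 / 3 * (3 / 2 * y ^ ((3 : ℝ) / 2 - 1)) = 2 * √y := by
    rw [Real.sqrt_eq_rpow]
    norm_num
    ring
  rw [e] at this
  exact this

lemma Phi_continuous : Continuous Phi :=
  continuous_iff_continuousAt.2 fun y => (Phi_hasDerivAt y).continuousAt

lemma Phi_sq {y : ℝ} (hy : 0 ≤ y) : Phi (y ^ 2) = 4 / 3 * y ^ 3 := by
  unfold Phi
  rw [← Real.rpow_natCast, ← Real.rpow_mul hy]
  norm_num

lemma lip_of_deriv {F F' : ℝ → ℝ} {B c : ℝ} (hF : ∀ y ∈ Icc 0 B, HasDerivAt F (F' y) y)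
    (hc : ∀ y ∈ Icc 0 B, |F' y| ≤ c) {y z : ℝ} (hy : y ∈ Icc 0 B) (hz : z ∈ Icc 0 B) :
    |F y - F z| ≤ c * |y - z| :=
  (convex_Icc 0 B).norm_image_sub_le_of_norm_hasDerivWithin_le
    (fun y hy => (hF y hy).hasDerivWithinAt) hc hz hy

lemma sqrt_add_hasDerivAt {η y : ℝ} (hη : 0 < η) (hy : 0 ≤ y) :
    HasDerivAt (fun y => √(y + η)) (1 / (2 * √(y + η))) y := by
  simpa using ((hasDerivAt_id' y).add_const η).sqrt (by positivity)

/-- Finite-difference form, with step `h`, of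
`∂ₜu - x² ∂ₓ²u - x² ∂ₓu - ∂ₓΦ(u) - (4x - 4) u + x² (∂ₓ√(u + η))²`, an expression equal to
`-x² (∂ₓn)²` for `u = n²` and `η = 0`. -/
noncomputable def defect (u : ℝ → ℝ → ℝ) (η h τ x : ℝ) : ℝ :=
  (u x τ - u x (τ - h)) / h - x ^ 2 * ((u (x + h) τ + u (x - h) τ - 2 * u x τ) / h ^ 2)
    - x ^ 2 * ((u (x + h) τ - u x τ) / h) - (Phi (u (x + h) τ) - Phi (u x τ)) / h
    - (4 * x - 4) * u x τ + x ^ 2 * ((√(u (x + h) τ + η) - √(u x τ + η)) / h) ^ 2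

lemma continuous_comp₂ {u : ℝ → ℝ → ℝ} (hu : Continuous fun p : ℝ × ℝ => u p.1 p.2)
    {X : Type*} [TopologicalSpace X] {f g : X → ℝ} (hf : Continuous f) (hg : Continuous g) :
    Continuous fun p => u (f p) (g p) :=
  hu.comp (hf.prodMk hg)

lemma defect_continuous {u : ℝ → ℝ → ℝ} (hu : Continuous fun p : ℝ × ℝ => u p.1 p.2) (η h : ℝ) :
    Continuous fun p : ℝ × ℝ => defect u η h p.1 p.2 := by
  have h1 := continuous_comp₂ hu continuous_snd (continuous_fst (X := ℝ))
  have h2 := continuous_comp₂ hu continuous_snd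
    ((continuous_fst (X := ℝ) (Y := ℝ)).sub (continuous_const (y := h)))
  have h3 := continuous_comp₂ hu ((continuous_snd (Y := ℝ)).add (continuous_const (y := h)))
    (continuous_fst (X := ℝ))
  have h4 := continuous_comp₂ hu ((continuous_snd (Y := ℝ)).sub (continuous_const (y := h)))
    (continuous_fst (X := ℝ))
  have h5 := Phi_continuous.comp h1
  have h6 := Phi_continuous.comp h3
  simp only [Function.comp_def] at h5 h6
  unfold defect
  simp only [div_eq_mul_inv]
  fun_prop

lemma tendsto_fwd_diff {f : ℝ → ℝ} {x p : ℝ} (hf : HasDerivAt f p x) :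
    Tendsto (fun h => (f (x + h) - f x) / h) (𝓝[>] 0) (𝓝 p) := by
  refine ((hasDerivAt_iff_tendsto_slope_zero.1 hf).mono_left
      (nhdsWithin_mono 0 (fun y (hy : 0 < y) => ne_of_gt hy))).congr fun h => ?_
  simp [div_eq_inv_mul]

lemma abs_div_le_of_le {y c h : ℝ} (hh : 0 < h) (hy : |y| ≤ c * |h|) : |y / h| ≤ c := by
  rw [abs_div, div_le_iff₀ (abs_pos.2 hh.ne')]
  exact hy

/-- An upper bound for the defect uniform in the step `h`, needed for dominated convergence of its
positive part; semiconvexity makes a one-sided bound on the second difference enough. -/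
lemma defect_le {u : ℝ → ℝ → ℝ} {η h τ x b B C L Λ : ℝ} (hη : 0 < η) (hh0 : 0 < h)
    (hx0 : 0 < x) (hxb' : x ≤ b) (hux : u x τ ∈ Icc 0 B) (huxh : u (x + h) τ ∈ Icc 0 B)
    (k1 : (u x τ - u x (τ - h)) / h ≤ L)
    (k2 : -C ≤ (u (x + h) τ + u (x - h) τ - 2 * u x τ) / h ^ 2)
    (k3 : |u (x + h) τ - u x τ| ≤ Λ * |h|) :
    defect u η h τ x ≤ L + b ^ 2 * max C 0 + b ^ 2 * Λ + 2 * √B * Λ + (4 * b + 4) * B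
      + b ^ 2 * (1 / (2 * √η) * Λ) ^ 2 := by
  have hb0 : 0 < b := hx0.trans_le hxb'
  have hB0 : 0 ≤ B := hux.1.trans hux.2
  have hΛ0 : 0 ≤ Λ := by
    have h1 := (abs_nonneg _).trans k3
    exact nonneg_of_mul_nonneg_left h1 (abs_pos.2 hh0.ne')
  have k4 : |Phi (u (x + h) τ) - Phi (u x τ)| ≤ 2 * √B * Λ * |h| := by
    have := lip_of_deriv (B := B) (c := 2 * √B) (fun y _ => Phi_hasDerivAt y) (by
      intro y hy
      rw [abs_of_nonneg (by positivity)]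
      have := hy.2
      gcongr) huxh hux
    refine this.trans ?_
    rw [mul_assoc (2 * √B)]
    gcongr
  have k5 : |√(u (x + h) τ + η) - √(u x τ + η)| ≤ 1 / (2 * √η) * Λ * |h| := by
    have := lip_of_deriv (B := B) (c := 1 / (2 * √η))
      (fun y hy => sqrt_add_hasDerivAt hη hy.1) (by
      intro y hy
      rw [abs_of_nonneg (by positivity)]
      have := hy.1
      gcongr
      linarith) huxh hux
    refine this.trans ?_
    rw [mul_assoc (1 / (2 * √η))]
    gcongr
  have j3 := (abs_le.1 (abs_div_le_of_le hh0 k3)).1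
  have j4 := (abs_le.1 (abs_div_le_of_le hh0 k4)).1
  have j5 := abs_div_le_of_le hh0 k5
  have hxb : x ^ 2 ≤ b ^ 2 := by gcongr
  have hC0 : -(b ^ 2 * max C 0) ≤
      x ^ 2 * ((u (x + h) τ + u (x - h) τ - 2 * u x τ) / h ^ 2) := by
    have h1 : -max C 0 ≤ (u (x + h) τ + u (x - h) τ - 2 * u x τ) / h ^ 2 :=
      (neg_le_neg (le_max_left C 0)).trans k2
    have h2 : x ^ 2 * max C 0 ≤ b ^ 2 * max C 0 := by gcongr
    have h3 := mul_le_mul_of_nonneg_left h1 (sq_nonneg x)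
    linarith
  have i3 : -(b ^ 2 * Λ) ≤ x ^ 2 * ((u (x + h) τ - u x τ) / h) := by
    have : x ^ 2 * Λ ≤ b ^ 2 * Λ := by gcongr
    nlinarith [sq_nonneg x]
  have i5 : x ^ 2 * ((√(u (x + h) τ + η) - √(u x τ + η)) / h) ^ 2
      ≤ b ^ 2 * (1 / (2 * √η) * Λ) ^ 2 := by
    rw [← sq_abs ((√(u (x + h) τ + η) - √(u x τ + η)) / h)]
    gcongr
  have i6 : -((4 * b + 4) * B) ≤ (4 * x - 4) * u x τ := by
    have e1 := mul_nonneg hx0.le hux.1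
    have e2 := mul_nonneg hb0.le hB0
    nlinarith [hux.2, hux.1]
  unfold defect
  linarith only [k1, hC0, i3, j4, i5, i6]

/-- At a point of differentiability of `u(·,τ)` the positive part of the excess of the defect
tends to zero with the step. -/
lemma defect_pos_tendsto {u : ℝ → ℝ → ℝ} {η τ x q E : ℝ} (hη : 0 < η) (hux : 0 ≤ u x τ)
    (hd : HasDerivAt (fun y => u y τ) q x)
    (hpt : ∀ ε > 0, ∀ᶠ h in 𝓝[>] (0:ℝ),
      (u x τ - u x (τ - h)) / h - x ^ 2 * ((u (x + h) τ + u (x - h) τ - 2 * u x τ) / h ^ 2)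
        ≤ x ^ 2 * q + 2 * √(u x τ) * q + (4 * x - 4) * u x τ
          - x ^ 2 * (q ^ 2 / (4 * (u x τ + η))) + E + ε) :
    Tendsto (fun h => max (defect u η h τ x - E) 0) (𝓝[>] 0) (𝓝 0) := by
  have l1 := tendsto_fwd_diff hd
  have l2 := tendsto_fwd_diff ((Phi_hasDerivAt (u x τ)).comp x hd)
  have l3 := (tendsto_fwd_diff ((sqrt_add_hasDerivAt hη hux).comp x hd)).pow 2
  have e3 : (1 / (2 * √(u x τ + η)) * q) ^ 2 = q ^ 2 / (4 * (u x τ + η)) := by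
    have h1 := hux
    rw [mul_pow, div_pow, mul_pow, Real.sq_sqrt (by positivity)]
    ring
  rw [e3] at l3
  simp only [Function.comp_def] at l2 l3
  -- the sum of the quotients that converge at a point of differentiability
  have l4 := (((l1.const_mul (x ^ 2)).add l2).sub (l3.const_mul (x ^ 2)))
  rw [Metric.tendsto_nhds]
  intro ε hε
  have l5 := l4.eventually_const_lt (show (x ^ 2 * q + 2 * √(u x τ) * q
    - x ^ 2 * (q ^ 2 / (4 * (u x τ + η)))) - ε / 3 < x ^ 2 * q + 2 * √(u x τ) * q
    - x ^ 2 * (q ^ 2 / (4 * (u x τ + η))) by linarith)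
  filter_upwards [l5, hpt (ε / 3) (by positivity)] with h k1 k2
  rw [Real.dist_eq, sub_zero, abs_of_nonneg (le_max_right _ _)]
  refine max_lt ?_ hε
  simp only [defect]
  linarith only [k1, k2, hε]

/-- The integrated form of `exists_regularization`: against a nonnegative cutoff, the finite
difference defect is asymptotically `O(η)` as the step tends to zero. -/
lemma exists_reg_integral {n : ℝ → ℝ → ℝ} {n₀ : ℝ → ℝ} (hsol : IsKompSol n n₀) {M : ℝ}
    (hM : ∀ x t : ℝ, 0 < x → 0 < t → n x t ≤ M) {a b α β s t η H : ℝ}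
    (ha : 0 < a) (haα : a < α) (hβb : β < b) (hs : 0 < s) (hst : s < t) (hη : 0 < η)
    (hH : 0 < H) {φ : ℝ → ℝ}
    (hφc : Continuous φ) (hφ0 : ∀ x, 0 ≤ φ x) (hφs : ∀ x, x ∉ Icc α β → φ x = 0) :
    ∃ u : ℝ → ℝ → ℝ, (Continuous fun p : ℝ × ℝ => u p.1 p.2) ∧
      (∀ x ∈ Icc a b, ∀ τ ∈ Icc (s / 2) t, n x τ ^ 2 ≤ u x τ ∧ u x τ ≤ n x τ ^ 2 + η) ∧
      ∀ θ > 0, ∀ᶠ m : ℕ in atTop,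
        ∫ p, φ p.2 * defect u η (H / (m + 1)) p.1 p.2 ∂stripMeas s t
          ≤ ∫ p, φ p.2 * ((4 * M ^ 2 / a ^ 2 + 4 * b) * η) ∂stripMeas s t + θ := by
  set δ := min (α - a) (b - β) / 2 with hδdef
  have hδ : 0 < δ := by
    have : 0 < min (α - a) (b - β) := lt_min (by linarith) (by linarith)
    positivity
  have hδ1 : a + 2 * δ ≤ α := by
    have := min_le_left (α - a) (b - β)
    linarith
  have hδ2 : β + 2 * δ ≤ b := by
    have := min_le_right (α - a) (b - β)
    linarith
  obtain ⟨u, huc, hclose, ⟨L, hL⟩, ⟨C, hC⟩, ⟨Λ, hΛ⟩, hpt⟩ := exists_regularization hsol hM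
    (a := a) (b := b) (T₀ := s / 4) (T₁ := t + s / 4) (d := s / 4) ha (by positivity)
    (by linarith) (by positivity) hδ hη
  have eJ : Icc (s / 4 + s / 4) (t + s / 4 - s / 4) = Icc (s / 2) t := by
    congr 1 <;> ring
  rw [eJ] at hclose hL hC hΛ hpt
  refine ⟨u, huc, hclose, ?_⟩
  have hIoc : ∀ τ ∈ Ioc s t, τ ∈ Icc (s / 2) t := fun τ hτ => ⟨by linarith [hτ.1], hτ.2⟩
  set E := (4 * M ^ 2 / a ^ 2 + 4 * b) * η with hE
  set B := M ^ 2 + η with hB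
  have huB : ∀ x ∈ Icc a b, ∀ τ ∈ Icc (s / 2) t, u x τ ∈ Icc 0 B := by
    intro x hx τ hτ
    have hx0 : 0 < x := ha.trans_le hx.1
    have hτ0 : 0 < τ := lt_of_lt_of_le (by positivity) hτ.1
    have h1 := hclose x hx τ hτ
    have h2 : n x τ ^ 2 ≤ M ^ 2 := by
      have h3 := hsol.nonneg x τ hx0 hτ0
      have h4 := hM x τ hx0 hτ0
      gcongr
    exact ⟨(sq_nonneg _).trans h1.1, by linarith⟩
  set F : ℕ → ℝ × ℝ → ℝ := fun m p =>
    φ p.2 * max (defect u η (H / (m + 1)) p.1 p.2 - E) 0 with hF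
  have hFc : ∀ m, Continuous (F m) := by
    intro m
    have := defect_continuous huc η (H / (m + 1))
    fun_prop
  have hstep : Tendsto (fun m : ℕ => H / ((m : ℝ) + 1)) atTop (𝓝[>] 0) := by
    refine tendsto_nhdsWithin_iff.2 ⟨?_, Eventually.of_forall fun m => ?_⟩
    · exact tendsto_const_nhds.div_atTop
        (tendsto_atTop_add_const_right _ _ tendsto_natCast_atTop_atTop)
    · have : (0:ℝ) < H / ((m:ℝ) + 1) := by positivity
      exact this
  have hlim : Tendsto (fun m => ∫ p, F m p ∂stripMeas s t) atTop
      (𝓝 (∫ p, (fun _ => (0:ℝ)) p ∂stripMeas s t)) := by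
    obtain ⟨Bφ, hBφ⟩ := (isCompact_Icc (a := α) (b := β)).exists_bound_of_continuousOn
      hφc.continuousOn
    set R := L + b ^ 2 * max C 0 + b ^ 2 * Λ + 2 * √B * Λ + (4 * b + 4) * B
      + b ^ 2 * (1 / (2 * √η) * Λ) ^ 2 with hR
    refine strip_tendsto (a := α) (b := β) (B := Bφ * max (R - E) 0)
      (fun m => (hFc m).aestronglyMeasurable) ?_ ?_ ?_
    · have e1 : ∀ᶠ m : ℕ in atTop, H / ((m : ℝ) + 1) < min δ 1 :=
        hstep.eventually (nhdsWithin_le_nhds (Iio_mem_nhds (lt_min hδ one_pos)))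
      filter_upwards [e1] with m hm p hp1 hp2
      obtain ⟨τ, x⟩ := p
      simp only at hp1 hp2
      set h := H / ((m : ℝ) + 1) with hh
      have hh0 : 0 < h := by positivity
      have hhδ : h < δ := hm.trans_le (min_le_left _ _)
      have hh1 : h < 1 := hm.trans_le (min_le_right _ _)
      have hτ := hIoc τ hp1
      have hx : x ∈ Icc a b := ⟨by linarith [hp2.1], by linarith [hp2.2]⟩
      have hxh : x + h ∈ Icc a b := ⟨by linarith [hp2.1], by linarith [hp2.2]⟩
      have hx0 : 0 < x := ha.trans_le hx.1
      have hb0 : 0 < b := hx0.trans_le hx.2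
      have hux := huB x hx τ hτ
      have huxh := huB (x + h) hxh τ hτ
      have hB0 : 0 ≤ B := hux.1.trans hux.2
      have k1 := hL x hx τ hτ h hh0 hh1.le
      have k2 := hC τ hτ x h hh0 (by linarith [hp2.1]) (by linarith [hp2.2])
      have k3 : |u (x + h) τ - u x τ| ≤ Λ * |h| := by
        have := hΛ τ hτ (x + h) ⟨by linarith [hp2.1], by linarith [hp2.2]⟩ x
          ⟨by linarith [hp2.1], by linarith [hp2.2]⟩
        simpa using this
      have hdef : defect u η h τ x ≤ R :=
        defect_le hη hh0 hx0 hx.2 hux huxh k1 k2 k3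
      have hBφ0 := hBφ x hp2
      rw [Real.norm_eq_abs] at hBφ0
      simp only [hF]
      rw [abs_mul, abs_of_nonneg (le_max_right _ (0:ℝ))]
      have : 0 ≤ Bφ := (abs_nonneg _).trans hBφ0
      gcongr
    · exact Eventually.of_forall fun m p hp => by simp [hF, hφs p.2 hp]
    · have hmeas : MeasurableSet {p : ℝ × ℝ | p.2 ∈ Icc α β →
          DifferentiableAt ℝ (fun y => u y p.1) p.2} := by
        have h1 : MeasurableSet {p : ℝ × ℝ | DifferentiableAt ℝ (fun y => u y p.1) p.2} :=
          measurableSet_of_differentiableAt_with_param ℝ (f := fun τ y => u y τ)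
            (continuous_comp₂ huc continuous_snd continuous_fst)
        have h2 : MeasurableSet {p : ℝ × ℝ | p.2 ∈ Icc α β} := measurable_snd measurableSet_Icc
        exact h2.imp h1
      have hae : ∀ᵐ p ∂stripMeas s t, p.2 ∈ Icc α β →
          DifferentiableAt ℝ (fun y => u y p.1) p.2 := by
        rw [stripMeas, Measure.ae_prod_iff_ae_ae hmeas]
        filter_upwards [ae_restrict_mem measurableSet_Ioc] with τ hτ
        have hlip : LipschitzOnWith Λ.toNNReal (fun y => u y τ) (Icc (a + δ) (b - δ)) := by
          refine LipschitzOnWith.of_dist_le_mul fun x hx y hy => ?_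
          rw [Real.dist_eq, Real.dist_eq]
          refine (hΛ τ (hIoc τ hτ) x hx y hy).trans ?_
          gcongr
          exact Real.le_coe_toNNReal Λ
        filter_upwards [hlip.ae_differentiableWithinAt_of_mem_real] with x hx hxα
        refine (hx ⟨by linarith [hxα.1], by linarith [hxα.2]⟩).differentiableAt ?_
        exact Icc_mem_nhds (by linarith [hxα.1]) (by linarith [hxα.2])
      filter_upwards [hae, ae_strip s t] with p hdiff hp1
      obtain ⟨τ, x⟩ := p
      by_cases hx : x ∈ Icc α β
      swap
      · simp [hF, hφs x hx]
      have hxI : x ∈ Ioo a b := ⟨by linarith [hx.1], by linarith [hx.2]⟩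
      have hτ := hIoc τ hp1
      have hd := (hdiff hx).hasDerivAt
      simp only at hd
      set q := deriv (fun y => u y τ) x with hq
      have hux := huB x (Ioo_subset_Icc_self hxI) τ hτ
      have hmax := defect_pos_tendsto (E := E) hη hux.1 hd (hpt τ hτ x hxI q hd)
      simpa [hF] using (hmax.comp hstep).const_mul (φ x)
  intro θ hθ
  rw [integral_zero] at hlim
  filter_upwards [hlim.eventually_lt_const hθ] with m hm
  have i1 : Integrable (fun p : ℝ × ℝ => φ p.2 * E) (stripMeas s t) :=
    strip_integrable_cont (a := α) (b := β) (by fun_prop) fun p hp => by simp [hφs p.2 hp]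
  have i2 : Integrable (F m) (stripMeas s t) :=
    strip_integrable_cont (a := α) (b := β) (hFc m) fun p hp => by simp [hF, hφs p.2 hp]
  have hdc := defect_continuous huc η (H / (m + 1))
  have i3 : Integrable (fun p : ℝ × ℝ => φ p.2 * defect u η (H / (m + 1)) p.1 p.2)
      (stripMeas s t) :=
    strip_integrable_cont (a := α) (b := β) (by fun_prop) fun p hp => by simp [hφs p.2 hp]
  calc _ ≤ ∫ p, (φ p.2 * E + F m p) ∂stripMeas s t := by
        refine integral_mono i3 (i1.add i2) fun p => ?_
        simp only [hF]
        rw [← mul_add]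
        refine mul_le_mul_of_nonneg_left ?_ (hφ0 _)
        linarith [le_max_left (defect u η (H / (m + 1)) p.1 p.2 - E) 0]
    _ = ∫ p, φ p.2 * E ∂stripMeas s t + ∫ p, F m p ∂stripMeas s t := integral_add i1 i2
    _ ≤ _ := by linarith

/-! ### Summation by parts -/

lemma strip_shift_mul (s t h : ℝ) (ψ : ℝ → ℝ) (w : ℝ → ℝ → ℝ) :
    ∫ p, ψ p.2 * w (p.2 + h) p.1 ∂stripMeas s t
      = ∫ p, ψ (p.2 - h) * w p.2 p.1 ∂stripMeas s t := by
  rw [← strip_shift s t h (fun p => ψ (p.2 - h) * w p.2 p.1)]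
  simp

lemma strip_mul_integrable {s t α β : ℝ} {ψ : ℝ → ℝ} (hψ : Continuous ψ)
    (h0 : ∀ x, x ∉ Icc α β → ψ x = 0) {w : ℝ → ℝ → ℝ}
    (hw : Continuous fun p : ℝ × ℝ => w p.1 p.2) (c d : ℝ) :
    Integrable (fun p : ℝ × ℝ => ψ (p.2 + c) * w (p.2 + d) p.1) (stripMeas s t) := by
  have h1 := continuous_comp₂ hw ((continuous_snd (Y := ℝ)).add (continuous_const (y := d)))
    (continuous_fst (X := ℝ))
  refine strip_integrable_cont (a := α - c) (b := β - c) (by fun_prop) fun p hp => ?_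
  rw [h0, zero_mul]
  intro h
  exact hp ⟨by linarith [h.1], by linarith [h.2]⟩

lemma strip_first_diff {s t α β h : ℝ} {ψ : ℝ → ℝ} (hψ : Continuous ψ)
    (h0 : ∀ x, x ∉ Icc α β → ψ x = 0) {w : ℝ → ℝ → ℝ}
    (hw : Continuous fun p : ℝ × ℝ => w p.1 p.2) :
    ∫ p, ψ p.2 * ((w (p.2 + h) p.1 - w p.2 p.1) / h) ∂stripMeas s t
      = ∫ p, (ψ (p.2 - h) - ψ p.2) / h * w p.2 p.1 ∂stripMeas s t := by
  have i1 := strip_mul_integrable (s := s) (t := t) hψ h0 hw 0 h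
  have i2 := strip_mul_integrable (s := s) (t := t) hψ h0 hw 0 0
  have i3 := strip_mul_integrable (s := s) (t := t) hψ h0 hw (-h) 0
  simp only [add_zero, ← sub_eq_add_neg] at i1 i2 i3
  calc _ = ∫ p, (ψ p.2 * w (p.2 + h) p.1 - ψ p.2 * w p.2 p.1) / h ∂stripMeas s t := by
        congr 1; ext p; ring
    _ = ∫ p, (ψ (p.2 - h) * w p.2 p.1 - ψ p.2 * w p.2 p.1) / h ∂stripMeas s t := by
        rw [integral_div, integral_div, integral_sub i1 i2, integral_sub i3 i2, strip_shift_mul]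
    _ = _ := by congr 1; ext p; ring

lemma strip_second_diff {s t α β h : ℝ} {ψ : ℝ → ℝ} (hψ : Continuous ψ)
    (h0 : ∀ x, x ∉ Icc α β → ψ x = 0) {w : ℝ → ℝ → ℝ}
    (hw : Continuous fun p : ℝ × ℝ => w p.1 p.2) :
    ∫ p, ψ p.2 * ((w (p.2 + h) p.1 + w (p.2 - h) p.1 - 2 * w p.2 p.1) / h ^ 2) ∂stripMeas s t
      = ∫ p, (ψ (p.2 + h) + ψ (p.2 - h) - 2 * ψ p.2) / h ^ 2 * w p.2 p.1 ∂stripMeas s t := by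
  have i1 := strip_mul_integrable (s := s) (t := t) hψ h0 hw 0 h
  have i2 := strip_mul_integrable (s := s) (t := t) hψ h0 hw 0 0
  have i3 := strip_mul_integrable (s := s) (t := t) hψ h0 hw (-h) 0
  have i4 := strip_mul_integrable (s := s) (t := t) hψ h0 hw 0 (-h)
  have i5 := strip_mul_integrable (s := s) (t := t) hψ h0 hw h 0
  have e := strip_shift_mul s t (-h) ψ w
  simp only [add_zero, ← sub_eq_add_neg, sub_neg_eq_add] at i1 i2 i3 i4 i5 e
  calc _ = ∫ p, (ψ p.2 * w (p.2 + h) p.1 + ψ p.2 * w (p.2 - h) p.1 - 2 * (ψ p.2 * w p.2 p.1)) / h ^ 2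
          ∂stripMeas s t := by
        congr 1; ext p; ring
    _ = ∫ p, (ψ (p.2 - h) * w p.2 p.1 + ψ (p.2 + h) * w p.2 p.1 - 2 * (ψ p.2 * w p.2 p.1)) / h ^ 2
          ∂stripMeas s t := by
        have i14 : Integrable (fun p : ℝ × ℝ => ψ p.2 * w (p.2 + h) p.1 + ψ p.2 * w (p.2 - h) p.1)
            (stripMeas s t) := i1.add i4
        have i35 : Integrable (fun p : ℝ × ℝ => ψ (p.2 - h) * w p.2 p.1 + ψ (p.2 + h) * w p.2 p.1)
            (stripMeas s t) := i3.add i5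
        rw [integral_div, integral_div, integral_sub i14 (i2.const_mul 2),
          integral_sub i35 (i2.const_mul 2), integral_add i1 i4, integral_add i3 i5,
          strip_shift_mul, e]
    _ = _ := by congr 1; ext p; ring

/-- Coefficient of `u` in the defect after summation by parts against the cutoff `φ`. -/
noncomputable def qCoef (φ : ℝ → ℝ) (h x : ℝ) : ℝ :=
  ((x + h) ^ 2 * φ (x + h) + (x - h) ^ 2 * φ (x - h) - 2 * (x ^ 2 * φ x)) / h ^ 2
    + ((x - h) ^ 2 * φ (x - h) - x ^ 2 * φ x) / h + (4 * x - 4) * φ x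

lemma defect_by_parts {s t α β h η : ℝ} {φ : ℝ → ℝ} (hφ : Continuous φ)
    (h0 : ∀ x, x ∉ Icc α β → φ x = 0) {u : ℝ → ℝ → ℝ}
    (hu : Continuous fun p : ℝ × ℝ => u p.1 p.2) :
    ∫ p, φ p.2 * defect u η h p.1 p.2 ∂stripMeas s t
      = ∫ p, φ p.2 * ((u p.2 p.1 - u p.2 (p.1 - h)) / h) ∂stripMeas s t
        - ∫ p, qCoef φ h p.2 * u p.2 p.1 ∂stripMeas s t
        - ∫ p, (φ (p.2 - h) - φ p.2) / h * Phi (u p.2 p.1) ∂stripMeas s t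
        + ∫ p, φ p.2 * (p.2 ^ 2 * ((√(u (p.2 + h) p.1 + η) - √(u p.2 p.1 + η)) / h) ^ 2)
            ∂stripMeas s t := by
  have c1 := continuous_comp₂ hu continuous_snd (continuous_fst (X := ℝ))
  have c2 := continuous_comp₂ hu continuous_snd
    ((continuous_fst (X := ℝ) (Y := ℝ)).sub (continuous_const (y := h)))
  have c3 := continuous_comp₂ hu ((continuous_snd (Y := ℝ)).add (continuous_const (y := h)))
    (continuous_fst (X := ℝ))
  have c4 := continuous_comp₂ hu ((continuous_snd (Y := ℝ)).sub (continuous_const (y := h)))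
    (continuous_fst (X := ℝ))
  have c5 := Phi_continuous.comp c1
  have c6 := Phi_continuous.comp c3
  simp only [Function.comp_def] at c5 c6
  have hPhi : Continuous fun p : ℝ × ℝ => (fun x τ => Phi (u x τ)) p.1 p.2 :=
    Phi_continuous.comp hu
  have hψ : Continuous fun x => x ^ 2 * φ x := by fun_prop
  have hψ0 : ∀ x, x ∉ Icc α β → x ^ 2 * φ x = 0 := fun x hx => by simp [h0 x hx]
  have e2 := strip_second_diff (s := s) (t := t) (h := h) hψ hψ0 hu
  have e3 := strip_first_diff (s := s) (t := t) (h := h) hψ hψ0 hu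
  have e4 := strip_first_diff (s := s) (t := t) (h := h) (w := fun x τ => Phi (u x τ)) hφ h0 hPhi
  have ii : ∀ f : ℝ × ℝ → ℝ, Continuous f → (∀ p, ∃ c, f p = φ p.2 * c) →
      Integrable f (stripMeas s t) := by
    intro f hf h
    refine strip_integrable_cont (a := α) (b := β) hf fun p hp => ?_
    obtain ⟨c, hc⟩ := h p
    rw [hc, h0 _ hp, zero_mul]
  have i1 : Integrable (fun p : ℝ × ℝ => φ p.2 * ((u p.2 p.1 - u p.2 (p.1 - h)) / h))
      (stripMeas s t) := ii _ (by simp only [div_eq_mul_inv]; fun_prop) fun p => ⟨_, rfl⟩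
  have i2 : Integrable (fun p : ℝ × ℝ => p.2 ^ 2 * φ p.2 *
      ((u (p.2 + h) p.1 + u (p.2 - h) p.1 - 2 * u p.2 p.1) / h ^ 2)) (stripMeas s t) :=
    ii _ (by simp only [div_eq_mul_inv]; fun_prop) fun p => ⟨p.2 ^ 2 *
      ((u (p.2 + h) p.1 + u (p.2 - h) p.1 - 2 * u p.2 p.1) / h ^ 2), by ring⟩
  have i3 : Integrable (fun p : ℝ × ℝ => p.2 ^ 2 * φ p.2 *
      ((u (p.2 + h) p.1 - u p.2 p.1) / h)) (stripMeas s t) :=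
    ii _ (by simp only [div_eq_mul_inv]; fun_prop) fun p => ⟨p.2 ^ 2 *
      ((u (p.2 + h) p.1 - u p.2 p.1) / h), by ring⟩
  have i4 : Integrable (fun p : ℝ × ℝ => φ p.2 *
      ((Phi (u (p.2 + h) p.1) - Phi (u p.2 p.1)) / h)) (stripMeas s t) :=
    ii _ (by simp only [div_eq_mul_inv]; fun_prop) fun p => ⟨_, rfl⟩
  have i5 : Integrable (fun p : ℝ × ℝ => (4 * p.2 - 4) * φ p.2 * u p.2 p.1) (stripMeas s t) :=
    ii _ (by fun_prop) fun p => ⟨(4 * p.2 - 4) * u p.2 p.1, by ring⟩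
  have i6 : Integrable (fun p : ℝ × ℝ => φ p.2 *
      (p.2 ^ 2 * ((√(u (p.2 + h) p.1 + η) - √(u p.2 p.1 + η)) / h) ^ 2)) (stripMeas s t) :=
    ii _ (by simp only [div_eq_mul_inv]; fun_prop) fun p => ⟨_, rfl⟩
  have j5 : ∀ {ψ : ℝ → ℝ} (hψ : Continuous ψ) (h0 : ∀ x, x ∉ Icc α β → ψ x = 0) (c : ℝ),
      Integrable (fun p : ℝ × ℝ => ψ (p.2 + c) * u p.2 p.1) (stripMeas s t) := by
    intro ψ hψ h0 c
    simpa using strip_mul_integrable (s := s) (t := t) hψ h0 hu c 0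
  have j1 := j5 hψ hψ0 h
  have j2 := j5 hψ hψ0 (-h)
  have j3 := j5 hψ hψ0 0
  simp only [add_zero, ← sub_eq_add_neg] at j2 j3
  have j6 : Integrable (fun p : ℝ × ℝ => ((p.2 + h) ^ 2 * φ (p.2 + h) + (p.2 - h) ^ 2 * φ (p.2 - h)
      - 2 * (p.2 ^ 2 * φ p.2)) / h ^ 2 * u p.2 p.1) (stripMeas s t) := by
    refine (((j1.add j2).sub (j3.const_mul 2)).div_const (h ^ 2)).congr (Eventually.of_forall fun p => ?_)
    simp only [Pi.add_apply, Pi.sub_apply]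
    ring
  have j7 : Integrable (fun p : ℝ × ℝ => ((p.2 - h) ^ 2 * φ (p.2 - h) - p.2 ^ 2 * φ p.2) / h
      * u p.2 p.1) (stripMeas s t) := by
    refine ((j2.sub j3).div_const h).congr (Eventually.of_forall fun p => ?_)
    simp only [Pi.sub_apply]
    ring
  have eq : ∫ p, qCoef φ h p.2 * u p.2 p.1 ∂stripMeas s t
      = ∫ p, p.2 ^ 2 * φ p.2 *
        ((u (p.2 + h) p.1 + u (p.2 - h) p.1 - 2 * u p.2 p.1) / h ^ 2) ∂stripMeas s t
      + ∫ p, p.2 ^ 2 * φ p.2 * ((u (p.2 + h) p.1 - u p.2 p.1) / h) ∂stripMeas s t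
      + ∫ p, (4 * p.2 - 4) * φ p.2 * u p.2 p.1 ∂stripMeas s t := by
    rw [e2, e3, ← integral_add' j6 j7, ← integral_add' (j6.add j7) i5]
    congr 1
    ext p
    simp only [qCoef, Pi.add_apply]
    ring
  rw [eq, ← e4, ← integral_add' i2 i3, ← integral_add' (i2.add i3) i5, ← integral_sub' i1 ((i2.add i3).add i5),
    ← integral_sub' (i1.sub ((i2.add i3).add i5)) i4,
    ← integral_add' ((i1.sub ((i2.add i3).add i5)).sub i4) i6]
  congr 1
  ext p
  simp only [defect, Pi.add_apply, Pi.sub_apply]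
  ring

/-! ### Difference quotients and time averages -/

lemma diff_quot_bound {ψ : ℝ → ℝ} (hψ : ContDiff ℝ 2 ψ) (hc : HasCompactSupport ψ) :
    ∃ C, 0 ≤ C ∧ ∀ x h, 0 < h → |(ψ (x + h) + ψ (x - h) - 2 * ψ x) / h ^ 2| ≤ C ∧
      |(ψ (x - h) - ψ x) / h| ≤ C := by
  have h1 : ContDiff ℝ 1 (deriv ψ) := by
    have := (contDiff_succ_iff_deriv (n := 1) (f := ψ)).1 (by simpa [one_add_one_eq_two] using hψ)
    exact this.2.2
  have h2 : Continuous (deriv (deriv ψ)) := h1.continuous_deriv le_rfl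
  obtain ⟨C1, hC1⟩ := hc.deriv.exists_bound_of_continuous h1.continuous
  obtain ⟨C2, hC2⟩ := hc.deriv.deriv.exists_bound_of_continuous h2
  have d1 : Differentiable ℝ ψ := hψ.differentiable (by norm_num)
  have d2 : Differentiable ℝ (deriv ψ) := h1.differentiable (by norm_num)
  have l1 : ∀ x y, |ψ y - ψ x| ≤ C1 * |y - x| := fun x y =>
    convex_univ.norm_image_sub_le_of_norm_deriv_le (fun z _ => d1 z) (fun z _ => hC1 z)
      (mem_univ x) (mem_univ y)
  have l2 : ∀ x y, |deriv ψ y - deriv ψ x| ≤ C2 * |y - x| := fun x y =>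
    convex_univ.norm_image_sub_le_of_norm_deriv_le (fun z _ => d2 z) (fun z _ => hC2 z)
      (mem_univ x) (mem_univ y)
  have hC10 : 0 ≤ C1 := (norm_nonneg _).trans (hC1 0)
  refine ⟨max C1 C2, hC10.trans (le_max_left _ _), fun x h hh => ⟨?_, ?_⟩⟩
  · have l3 : |(ψ (x + h) - ψ x) - (ψ (x - h + h) - ψ (x - h))| ≤ C2 * h * |x - (x - h)| := by
      refine convex_univ.norm_image_sub_le_of_norm_hasDerivWithin_le
        (f := fun y => ψ (y + h) - ψ y) (f' := fun y => deriv ψ (y + h) - deriv ψ y)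
        (fun z _ => ?_) (fun z _ => ?_) (mem_univ (x - h)) (mem_univ x)
      · exact (((d1 (z + h)).hasDerivAt.comp_add_const z h).sub
          (d1 z).hasDerivAt).hasDerivWithinAt
      · have := l2 z (z + h)
        rw [add_sub_cancel_left, abs_of_pos hh] at this
        exact this
    rw [sub_sub_cancel, abs_of_pos hh, sub_add_cancel] at l3
    rw [abs_div, abs_of_pos (by positivity : 0 < h ^ 2), div_le_iff₀ (by positivity)]
    calc _ = |(ψ (x + h) - ψ x) - (ψ x - ψ (x - h))| := by congr 1; ring
      _ ≤ C2 * h * h := l3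
      _ = C2 * h ^ 2 := by ring
      _ ≤ _ := by gcongr; exact le_max_right _ _
  · refine (abs_div_le_of_le hh ?_).trans (le_max_left C1 C2)
    have := l1 x (x - h)
    rwa [show x - h - x = -h by ring, abs_neg] at this

/-- The coarse difference quotient, of step `H = (m + 1) h`, is controlled by the fine one of step
`h`: it is an average of translates of the latter. -/
lemma coarse_le_fine {s t α β a' b' H : ℝ} {φ : ℝ → ℝ} (hφ : Continuous φ)
    (hφ0 : ∀ x, 0 ≤ φ x) (h0 : ∀ x, x ∉ Icc α β → φ x = 0) (ha' : 0 < a')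
    (h1 : ∀ x ∈ Icc a' b', φ x = 1) (hH : 0 < H) {g : ℝ → ℝ → ℝ}
    (hg : Continuous fun p : ℝ × ℝ => g p.1 p.2) (m : ℕ) :
    ∫ p, (Icc a' (b' - H)).indicator (fun x => x ^ 2 * ((g (x + H) p.1 - g x p.1) / H) ^ 2) p.2
        ∂stripMeas s t
      ≤ ∫ p, φ p.2 * (p.2 ^ 2 * ((g (p.2 + H / (m + 1)) p.1 - g p.2 p.1) / (H / (m + 1))) ^ 2)
        ∂stripMeas s t := by
  set h := H / ((m : ℝ) + 1) with hh
  have hm : (0:ℝ) < (m:ℝ) + 1 := by positivity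
  have hh0 : 0 < h := by positivity
  have hHh : H = (m + 1) * h := by rw [hh]; field_simp
  set W : ℝ × ℝ → ℝ := fun p => φ p.2 * (p.2 ^ 2 * ((g (p.2 + h) p.1 - g p.2 p.1) / h) ^ 2) with hW
  have hWc : Continuous W := by
    have c1 := continuous_comp₂ hg continuous_snd (continuous_fst (X := ℝ))
    have c3 := continuous_comp₂ hg ((continuous_snd (Y := ℝ)).add (continuous_const (y := h)))
      (continuous_fst (X := ℝ))
    simp only [hW, div_eq_mul_inv]
    fun_prop
  have hWs : ∀ j : ℕ, Integrable (fun p : ℝ × ℝ => W (p.1, p.2 + j * h)) (stripMeas s t) := by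
    intro j
    refine strip_integrable_cont (a := α - j * h) (b := β - j * h) (by fun_prop) fun p hp => ?_
    simp only [hW]
    rw [h0, zero_mul]
    intro hx
    exact hp ⟨by linarith [hx.1], by linarith [hx.2]⟩
  have hW0 : ∀ p, 0 ≤ W p := fun p => mul_nonneg (hφ0 _) (by positivity)
  have key : ∫ p, (1 / ((m : ℝ) + 1)) * ∑ j ∈ Finset.range (m + 1), W (p.1, p.2 + j * h)
      ∂stripMeas s t = ∫ p, W p ∂stripMeas s t := by
    rw [integral_const_mul, integral_finsetSum _ fun j _ => hWs j]
    simp only [strip_shift s t _ W]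
    rw [Finset.sum_const, Finset.card_range]
    simp only [nsmul_eq_mul]
    push_cast
    field_simp
  rw [← key]
  refine integral_mono_of_nonneg (Eventually.of_forall fun p => ?_)
    ((integrable_finsetSum _ fun j _ => hWs j).const_mul _) (Eventually.of_forall fun p => ?_)
  · exact indicator_nonneg (fun x _ => by positivity) _
  · obtain ⟨τ, x⟩ := p
    simp only
    by_cases hx : x ∈ Icc a' (b' - H)
    swap
    · rw [indicator_of_notMem hx]
      exact mul_nonneg (by positivity) (Finset.sum_nonneg fun j _ => hW0 _)
    rw [indicator_of_mem hx]
    have hx0 : 0 < x := ha'.trans_le hx.1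
    set D : ℕ → ℝ := fun j => (g (x + j * h + h) τ - g (x + j * h) τ) / h with hD
    have hsum : (g (x + H) τ - g x τ) / H = 1 / ((m:ℝ) + 1) * ∑ j ∈ Finset.range (m + 1), D j := by
      have := Finset.sum_range_sub (fun j : ℕ => g (x + j * h) τ) (m + 1)
      have e : ∑ j ∈ Finset.range (m + 1), D j = (g (x + H) τ - g x τ) / h := by
        simp only [hD]
        rw [← Finset.sum_div]
        congr 1
        rw [hHh]
        push_cast at this
        simp only [zero_mul, add_zero] at this
        rw [← this]
        refine Finset.sum_congr rfl fun j _ => ?_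
        rw [add_mul, one_mul, add_assoc]
      rw [e, hHh]
      field_simp
    have hcs := sq_sum_le_card_mul_sum_sq (s := Finset.range (m + 1)) (f := D)
    rw [Finset.card_range] at hcs
    push_cast at hcs
    rw [hsum]
    calc x ^ 2 * (1 / ((m:ℝ) + 1) * ∑ j ∈ Finset.range (m + 1), D j) ^ 2
        = x ^ 2 * (1 / ((m:ℝ) + 1)) ^ 2 * (∑ j ∈ Finset.range (m + 1), D j) ^ 2 := by ring
      _ ≤ x ^ 2 * (1 / ((m:ℝ) + 1)) ^ 2 * (((m:ℝ) + 1) * ∑ j ∈ Finset.range (m + 1), D j ^ 2) := by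
          gcongr
      _ = 1 / ((m:ℝ) + 1) * ∑ j ∈ Finset.range (m + 1), x ^ 2 * D j ^ 2 := by
          rw [← Finset.mul_sum]
          field_simp
      _ ≤ _ := by
          refine mul_le_mul_of_nonneg_left (Finset.sum_le_sum fun j hj => ?_) (by positivity)
          have hjm : (j:ℝ) ≤ m + 1 := by
            have := (Finset.mem_range.1 hj).le
            exact_mod_cast this
          have hjh : (j:ℝ) * h ≤ H := by rw [hHh]; gcongr
          have hj0 : 0 ≤ (j:ℝ) * h := by positivity
          simp only [hW]
          rw [h1 _ ⟨by linarith [hx.1], by linarith [hx.2]⟩, one_mul]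
          have : x ^ 2 ≤ (x + j * h) ^ 2 := by gcongr; linarith
          exact mul_le_mul_of_nonneg_right this (sq_nonneg _)

lemma tendsto_left_average {N : ℝ → ℝ} (hN : Continuous N) (t : ℝ) :
    Tendsto (fun h => (∫ τ in (t - h)..t, N τ) / h) (𝓝[>] 0) (𝓝 (N t)) := by
  have h1 : HasDerivAt (fun y => ∫ τ in (0:ℝ)..y, N τ) (N t) t :=
    intervalIntegral.integral_hasDerivAt_right (hN.intervalIntegrable _ _)
      hN.stronglyMeasurable.stronglyMeasurableAtFilter hN.continuousAt
  have h2 : HasDerivAt (fun y => ∫ τ in (0:ℝ)..(t - y), N τ) (-N t) 0 := by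
    have h3 : HasDerivAt (fun y : ℝ => t - y) (-1) 0 := (hasDerivAt_id' (0:ℝ)).const_sub t
    have h4 : HasDerivAt (fun y => ∫ τ in (0:ℝ)..y, N τ) (N t) (t - 0) := by simpa using h1
    have h6 := h4.comp (0:ℝ) h3
    rw [mul_neg_one] at h6
    exact h6
  have h5 := (tendsto_fwd_diff h2).neg
  rw [neg_neg] at h5
  refine h5.congr fun h => ?_
  rw [← intervalIntegral.integral_interval_sub_left (hN.intervalIntegrable 0 t)
    (hN.intervalIntegrable 0 (t - h))]
  simp only [zero_add, sub_zero]
  ring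

lemma slice_continuous {α β : ℝ} {φ : ℝ → ℝ} (hφ : Continuous φ)
    (h0 : ∀ x, x ∉ Icc α β → φ x = 0) {u : ℝ → ℝ → ℝ}
    (hu : Continuous fun p : ℝ × ℝ => u p.1 p.2) :
    Continuous fun τ => ∫ x, φ x * u x τ := by
  have e : ∀ τ, ∫ x, φ x * u x τ = ∫ x in Icc α β, φ x * u x τ := fun τ =>
    (setIntegral_eq_integral_of_forall_compl_eq_zero fun x hx => by simp [h0 x hx]).symm
  simp only [e]
  have c1 := continuous_comp₂ hu continuous_snd (continuous_fst (X := ℝ))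
  exact continuous_parametric_integral_of_continuous (by fun_prop) isCompact_Icc

lemma slice_integrable {α β : ℝ} {φ : ℝ → ℝ} (hφ : Continuous φ)
    (h0 : ∀ x, x ∉ Icc α β → φ x = 0) {w : ℝ → ℝ} (hw : Continuous w) :
    Integrable (fun x => φ x * w x) := by
  refine (hφ.mul hw).integrable_of_hasCompactSupport ?_
  exact HasCompactSupport.intro (isCompact_Icc (a := α) (b := β)) fun x hx => by
    simp [h0 x hx]

/-- The time difference term is bounded below by a difference of two averages over short intervals
that end at `t` and at `s`. -/
lemma time_lower {s t α β h η : ℝ} {φ : ℝ → ℝ} (hφ : Continuous φ)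
    (hφ0 : ∀ x, 0 ≤ φ x) (h0 : ∀ x, x ∉ Icc α β → φ x = 0) (hst : s < t)
    (hh : 0 < h) (hhs : h ≤ s / 2) {u w : ℝ → ℝ → ℝ}
    (hu : Continuous fun p : ℝ × ℝ => u p.1 p.2) (hw : Continuous fun p : ℝ × ℝ => w p.1 p.2)
    (hclose : ∀ x ∈ Icc α β, ∀ τ ∈ Icc (s / 2) t, w x τ ≤ u x τ ∧ u x τ ≤ w x τ + η) :
    (∫ τ in (t - h)..t, ∫ x, φ x * w x τ) / h - (∫ τ in (s - h)..s, ∫ x, φ x * w x τ) / h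
        - η * ∫ x, φ x
      ≤ ∫ p, φ p.2 * ((u p.2 p.1 - u p.2 (p.1 - h)) / h) ∂stripMeas s t := by
  set U : ℝ → ℝ := fun τ => ∫ x, φ x * u x τ with hU
  set N : ℝ → ℝ := fun τ => ∫ x, φ x * w x τ with hN
  have hUc : Continuous U := slice_continuous hφ h0 hu
  have hNc : Continuous N := slice_continuous hφ h0 hw
  have sl : ∀ {v : ℝ → ℝ → ℝ}, (Continuous fun p : ℝ × ℝ => v p.1 p.2) → ∀ τ,
      Integrable fun x => φ x * v x τ := fun hv τ =>
    slice_integrable hφ h0 (continuous_comp₂ hv continuous_id continuous_const)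
  have hφi : Integrable φ := by
    simpa using slice_integrable hφ h0 (w := fun _ => 1) continuous_const
  have e1 : ∫ p, φ p.2 * ((u p.2 p.1 - u p.2 (p.1 - h)) / h) ∂stripMeas s t
      = ∫ τ in s..t, (U τ - U (τ - h)) / h := by
    have hi : Integrable (fun p : ℝ × ℝ => φ p.2 * ((u p.2 p.1 - u p.2 (p.1 - h)) / h))
        (stripMeas s t) := by
      have c1 := continuous_comp₂ hu continuous_snd (continuous_fst (X := ℝ))
      have c2 := continuous_comp₂ hu continuous_snd
        ((continuous_fst (X := ℝ) (Y := ℝ)).sub (continuous_const (y := h)))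
      refine strip_integrable_cont (a := α) (b := β) ?_ fun p hp => by simp [h0 p.2 hp]
      simp only [div_eq_mul_inv]
      fun_prop
    rw [stripMeas] at hi ⊢
    rw [integral_prod _ hi, intervalIntegral.integral_of_le hst.le]
    congr 1
    ext τ
    simp only [hU]
    rw [← integral_sub (sl hu τ) (sl hu (τ - h)), ← integral_div]
    congr 1
    ext x
    ring
  have e2 : ∫ τ in s..t, (U τ - U (τ - h)) / h
      = ((∫ τ in (t - h)..t, U τ) - ∫ τ in (s - h)..s, U τ) / h := by
    have ii : ∀ a b, IntervalIntegrable U volume a b := fun a b => hUc.intervalIntegrable a b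
    rw [intervalIntegral.integral_div, intervalIntegral.integral_sub (ii _ _)
      ((by fun_prop : Continuous fun τ => U (τ - h)).intervalIntegrable _ _),
      intervalIntegral.integral_comp_sub_right U h]
    congr 1
    have a1 := intervalIntegral.integral_add_adjacent_intervals (ii (s - h) s) (ii s t)
    have a2 := intervalIntegral.integral_add_adjacent_intervals (ii (s - h) (t - h)) (ii (t - h) t)
    linarith
  have low : ∀ τ ∈ Icc (s / 2) t, N τ ≤ U τ := fun τ hτ => by
    refine integral_mono (sl hw τ) (sl hu τ) fun x => ?_
    by_cases hx : x ∈ Icc α β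
    · exact mul_le_mul_of_nonneg_left (hclose x hx τ hτ).1 (hφ0 x)
    · simp [h0 x hx]
  have up : ∀ τ ∈ Icc (s / 2) t, U τ ≤ N τ + η * ∫ x, φ x := fun τ hτ => by
    rw [← integral_const_mul, ← integral_add (sl hw τ) (hφi.const_mul η)]
    refine integral_mono (sl hu τ) ((sl hw τ).add (hφi.const_mul η)) fun x => ?_
    by_cases hx : x ∈ Icc α β
    · have := mul_le_mul_of_nonneg_left (hclose x hx τ hτ).2 (hφ0 x)
      linarith
    · simp [h0 x hx]
  have b1 : ∫ τ in (t - h)..t, N τ ≤ ∫ τ in (t - h)..t, U τ := by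
    refine intervalIntegral.integral_mono_on (by linarith) (hNc.intervalIntegrable _ _)
      (hUc.intervalIntegrable _ _) fun τ hτ => low τ ⟨by linarith [hτ.1], hτ.2⟩
  have b2 : ∫ τ in (s - h)..s, U τ ≤ (∫ τ in (s - h)..s, N τ) + h * (η * ∫ x, φ x) := by
    have hc : Continuous fun τ => N τ + η * ∫ x, φ x := by fun_prop
    have := intervalIntegral.integral_mono_on (μ := volume) (a := s - h) (b := s) (by linarith)
      (hUc.intervalIntegrable _ _) (hc.intervalIntegrable _ _) fun τ hτ => up τ
        ⟨by linarith [hτ.1], by linarith [hτ.2]⟩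
    rw [intervalIntegral.integral_add (hNc.intervalIntegrable _ _)
      (continuous_const.intervalIntegrable _ _), intervalIntegral.integral_const] at this
    simpa using this
  rw [e1, e2, ← sub_div, sub_le_iff_le_add, div_le_iff₀ hh, add_mul, div_mul_cancel₀ _ hh.ne']
  linarith

/-! ### The localized energy inequality -/

/-- Coefficient of `n²` in the localized inequality: the limit of `qCoef φ h` as `h → 0`. -/
noncomputable def qLim (φ : ℝ → ℝ) (x : ℝ) : ℝ :=
  deriv (deriv fun y => y ^ 2 * φ y) x - deriv (fun y => y ^ 2 * φ y) x + (4 * x - 4) * φ x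

lemma tendsto_bwd_diff {f : ℝ → ℝ} {x p : ℝ} (hf : HasDerivAt f p x) :
    Tendsto (fun h => (f (x - h) - f x) / h) (𝓝[>] 0) (𝓝 (-p)) := by
  have h3 : HasDerivAt (fun y : ℝ => x - y) (-1) 0 := (hasDerivAt_id' (0:ℝ)).const_sub x
  have h4 : HasDerivAt f p (x - 0) := by simpa using hf
  have h6 := h4.comp (0:ℝ) h3
  rw [mul_neg_one] at h6
  simpa using tendsto_fwd_diff h6

lemma qCoef_tendsto {φ : ℝ → ℝ} (hφ : ContDiff ℝ 2 φ) (x : ℝ) :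
    Tendsto (fun h => qCoef φ h x) (𝓝[>] 0) (𝓝 (qLim φ x)) := by
  have hψ : ContDiff ℝ 2 fun y => y ^ 2 * φ y := by fun_prop
  have h1 : ContDiff ℝ 1 (deriv fun y => y ^ 2 * φ y) :=
    ((contDiff_succ_iff_deriv (n := 1) (f := fun y => y ^ 2 * φ y)).1
      (by simpa [one_add_one_eq_two] using hψ)).2.2
  have d1 : Differentiable ℝ fun y => y ^ 2 * φ y := hψ.differentiable (by norm_num)
  have d2 := h1.differentiable (by norm_num)
  have l1 := tendsto_second_diff (Eventually.of_forall fun y => d1 y) (d2 x).hasDerivAt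
  have l2 := tendsto_bwd_diff (d1 x).hasDerivAt
  exact (l1.add l2).add_const _

lemma hasCompactSupport_of_zero_off {α β : ℝ} {φ : ℝ → ℝ} (h0 : ∀ x, x ∉ Icc α β → φ x = 0) :
    HasCompactSupport φ :=
  HasCompactSupport.intro (isCompact_Icc (a := α) (b := β)) h0

lemma qCoef_bound {α β : ℝ} {φ : ℝ → ℝ} (hφ : ContDiff ℝ 2 φ)
    (h0 : ∀ x, x ∉ Icc α β → φ x = 0) :
    ∃ C, 0 ≤ C ∧ ∀ x h, 0 < h → |qCoef φ h x| ≤ C ∧ |(φ (x - h) - φ x) / h| ≤ C := by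
  have hψ : ContDiff ℝ 2 fun y => y ^ 2 * φ y := by fun_prop
  have hψ0 : ∀ x, x ∉ Icc α β → x ^ 2 * φ x = 0 := fun x hx => by simp [h0 x hx]
  obtain ⟨C1, hC1, b1⟩ := diff_quot_bound hψ (hasCompactSupport_of_zero_off hψ0)
  obtain ⟨C2, hC2, b2⟩ := diff_quot_bound hφ (hasCompactSupport_of_zero_off h0)
  have h40 : ∀ x, x ∉ Icc α β → (4 * x - 4) * φ x = 0 := fun x hx => by simp [h0 x hx]
  have hφc := hφ.continuous
  obtain ⟨C3, b3⟩ := (hasCompactSupport_of_zero_off h40).exists_bound_of_continuous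
    (by fun_prop)
  have hC3 : 0 ≤ C3 := (norm_nonneg _).trans (b3 0)
  refine ⟨C1 + C1 + C3 + C2, by positivity, fun x h hh => ⟨?_, ?_⟩⟩
  · have e1 := abs_add_three (((x + h) ^ 2 * φ (x + h) + (x - h) ^ 2 * φ (x - h)
      - 2 * (x ^ 2 * φ x)) / h ^ 2) (((x - h) ^ 2 * φ (x - h) - x ^ 2 * φ x) / h) ((4 * x - 4) * φ x)
    have e2 := (b1 x h hh).1
    have e3 := (b1 x h hh).2
    have e4 := b3 x
    rw [Real.norm_eq_abs] at e4
    unfold qCoef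
    linarith only [e1, e2, e3, e4, hC2]
  · have := (b2 x h hh).2
    linarith

lemma qCoef_zero {α β a b h : ℝ} {φ : ℝ → ℝ} (h0 : ∀ x, x ∉ Icc α β → φ x = 0) (hh : 0 < h)
    (h1 : a + h ≤ α) (h2 : β + h ≤ b) {x : ℝ} (hx : x ∉ Icc a b) :
    qCoef φ h x = 0 ∧ (φ (x - h) - φ x) / h = 0 := by
  have e1 : φ x = 0 := h0 x fun h => hx ⟨by linarith [h.1], by linarith [h.2]⟩
  have e2 : φ (x + h) = 0 := h0 _ fun h => hx ⟨by linarith [h.1], by linarith [h.2]⟩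
  have e3 : φ (x - h) = 0 := h0 _ fun h => hx ⟨by linarith [h.1], by linarith [h.2]⟩
  simp [qCoef, e1, e2, e3]

set_option maxHeartbeats 1000000 in
/-- Energy inequality against a cutoff `φ`, with the dissipation replaced by a coarse difference
quotient on the set where `φ = 1`. -/
lemma cutoff_ineq {n : ℝ → ℝ → ℝ} {n₀ : ℝ → ℝ} (hsol : IsKompSol n n₀) {M : ℝ}
    (hM : ∀ x t : ℝ, 0 < x → 0 < t → n x t ≤ M) {α β a' b' s t H : ℝ}
    (hα : 0 < α) (hs : 0 < s) (hst : s < t) (hH : 0 < H) {φ : ℝ → ℝ}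
    (hφ : ContDiff ℝ 2 φ) (hφ0 : ∀ x, 0 ≤ φ x) (h0 : ∀ x, x ∉ Icc α β → φ x = 0)
    (h1 : ∀ x ∈ Icc a' b', φ x = 1) (ha' : 0 < a') :
    ∫ p, (Icc a' (b' - H)).indicator (fun x => x ^ 2 * ((n (x + H) p.1 - n x p.1) / H) ^ 2) p.2
        ∂stripMeas s t
      ≤ (∫ x, φ x * n x s ^ 2) - (∫ x, φ x * n x t ^ 2)
        + ∫ p, qLim φ p.2 * n p.2 p.1 ^ 2 ∂stripMeas s t
        + ∫ p, -deriv φ p.2 * (4 / 3 * n p.2 p.1 ^ 3) ∂stripMeas s t := by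
  have hφc := hφ.continuous
  have hη : ∀ k : ℕ, (0:ℝ) < 1 / ((k:ℝ) + 1) := fun k => by positivity
  have hη1 : ∀ k : ℕ, (1:ℝ) / ((k:ℝ) + 1) ≤ 1 := fun k => by
    rw [div_le_one (by positivity)]
    linarith [Nat.cast_nonneg (α := ℝ) k]
  have hηlim : Tendsto (fun k : ℕ => (1:ℝ) / ((k:ℝ) + 1)) atTop (𝓝 0) :=
    tendsto_one_div_add_atTop_nhds_zero_nat
  set a := α / 2 with ha_def
  set b := β + 1 with hb_def
  have ha : 0 < a := by positivity
  have haα : a < α := by rw [ha_def]; linarith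
  choose u huc hclose hreg using fun k : ℕ => exists_reg_integral hsol hM (a := a) (b := b)
    (α := α) (β := β) ha haα (by linarith) hs hst (hη k) hH hφc hφ0 h0
  have hm' : ∀ k : ℕ, ∃ m : ℕ, k ≤ m ∧
      ∫ p, φ p.2 * defect (u k) (1 / ((k:ℝ) + 1)) (H / (m + 1)) p.1 p.2 ∂stripMeas s t
        ≤ ∫ p, φ p.2 * ((4 * M ^ 2 / a ^ 2 + 4 * b) * (1 / ((k:ℝ) + 1))) ∂stripMeas s t
          + 1 / ((k:ℝ) + 1) := fun k =>
    ((eventually_ge_atTop k).and (hreg k _ (hη k))).exists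
  choose m hmk hm using hm'
  set h : ℕ → ℝ := fun k => H / ((m k : ℝ) + 1) with hh
  have hh0 : ∀ k, 0 < h k := fun k => by simp only [hh]; positivity
  have hhlim : Tendsto h atTop (𝓝[>] 0) := by
    refine tendsto_nhdsWithin_iff.2 ⟨?_, Eventually.of_forall hh0⟩
    refine tendsto_const_nhds.div_atTop (tendsto_atTop_add_const_right _ _ ?_)
    exact tendsto_natCast_atTop_atTop.comp (tendsto_atTop_mono hmk tendsto_id)
  have hhsmall : ∀ ε > 0, ∀ᶠ k in atTop, h k < ε := fun ε hε =>
    hhlim.eventually (nhdsWithin_le_nhds (Iio_mem_nhds hε))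
  have hIoc : ∀ τ ∈ Ioc s t, τ ∈ Icc (s / 2) t := fun τ hτ => ⟨by linarith [hτ.1], hτ.2⟩
  have hulim : ∀ x ∈ Icc a b, ∀ τ ∈ Icc (s / 2) t,
      Tendsto (fun k => u k x τ) atTop (𝓝 (n x τ ^ 2)) := fun x hx τ hτ => by
    refine tendsto_of_tendsto_of_tendsto_of_le_of_le tendsto_const_nhds ?_
      (fun k => (hclose k x hx τ hτ).1) (fun k => (hclose k x hx τ hτ).2)
    simpa using hηlim.const_add (n x τ ^ 2)
  set B := M ^ 2 + 1 with hB
  have huB : ∀ k, ∀ x ∈ Icc a b, ∀ τ ∈ Icc (s / 2) t, 0 ≤ u k x τ ∧ u k x τ ≤ B := by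
    intro k x hx τ hτ
    have hx0 : 0 < x := ha.trans_le hx.1
    have hτ0 : 0 < τ := lt_of_lt_of_le (by positivity) hτ.1
    have h1 := hclose k x hx τ hτ
    have h2 : n x τ ^ 2 ≤ M ^ 2 := by
      have h3 := hsol.nonneg x τ hx0 hτ0
      have h4 := hM x τ hx0 hτ0
      gcongr
    exact ⟨(sq_nonneg _).trans h1.1, by linarith [hη1 k]⟩
  obtain ⟨C, hC0, hCb⟩ := qCoef_bound hφ h0
  have hsupp : ∀ᶠ k in atTop, ∀ x, x ∉ Icc a b →
      qCoef φ (h k) x = 0 ∧ (φ (x - h k) - φ x) / h k = 0 := by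
    filter_upwards [hhsmall (α - a) (by linarith), hhsmall 1 one_pos] with k k1 k2 x hx
    exact qCoef_zero h0 (hh0 k) (by linarith) (by linarith) hx
  have hcu : ∀ k, Continuous fun p : ℝ × ℝ => u k p.2 p.1 := fun k =>
    continuous_comp₂ (huc k) continuous_snd (continuous_fst (X := ℝ))
  have L1 : Tendsto (fun k => ∫ p, qCoef φ (h k) p.2 * u k p.2 p.1 ∂stripMeas s t) atTop
      (𝓝 (∫ p, qLim φ p.2 * n p.2 p.1 ^ 2 ∂stripMeas s t)) := by
    refine strip_tendsto (a := a) (b := b) (B := C * B) (fun k => ?_)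
      (Eventually.of_forall fun k p hp1 hp2 => ?_) ?_ ?_
    · have := hcu k
      refine Continuous.aestronglyMeasurable ?_
      unfold qCoef
      simp only [div_eq_mul_inv]
      fun_prop
    · have e := huB k _ hp2 _ (hIoc _ hp1)
      rw [abs_mul, abs_of_nonneg e.1]
      exact mul_le_mul (hCb _ _ (hh0 k)).1 e.2 e.1 hC0
    · filter_upwards [hsupp] with k hk p hp
      rw [(hk _ hp).1, zero_mul]
    · filter_upwards [ae_strip s t] with p hp
      by_cases hx : p.2 ∈ Icc a b
      · exact ((qCoef_tendsto hφ p.2).comp hhlim).mul (hulim _ hx _ (hIoc _ hp))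
      · have e1 : Tendsto (fun k => qCoef φ (h k) p.2) atTop (𝓝 0) :=
          tendsto_const_nhds.congr' (by filter_upwards [hsupp] with k hk using (hk _ hx).1.symm)
        have e2 := tendsto_nhds_unique e1 ((qCoef_tendsto hφ p.2).comp hhlim)
        rw [← e2, zero_mul]
        refine tendsto_const_nhds.congr' ?_
        filter_upwards [hsupp] with k hk
        rw [(hk _ hx).1, zero_mul]
  have hPhiB : ∀ y, 0 ≤ y → y ≤ B → 0 ≤ Phi y ∧ Phi y ≤ Phi B := fun y hy hyB => by
    unfold Phi
    exact ⟨by positivity, by gcongr⟩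
  have L2 : Tendsto (fun k => ∫ p, (φ (p.2 - h k) - φ p.2) / h k * Phi (u k p.2 p.1)
      ∂stripMeas s t) atTop
      (𝓝 (∫ p, -deriv φ p.2 * (4 / 3 * n p.2 p.1 ^ 3) ∂stripMeas s t)) := by
    have hdl : ∀ x, Tendsto (fun k => (φ (x - h k) - φ x) / h k) atTop (𝓝 (-deriv φ x)) := fun x =>
      (tendsto_bwd_diff ((hφ.differentiable (by norm_num)) x).hasDerivAt).comp hhlim
    refine strip_tendsto (a := a) (b := b) (B := C * Phi B) (fun k => ?_)
      (Eventually.of_forall fun k p hp1 hp2 => ?_) ?_ ?_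
    · have := Phi_continuous.comp (hcu k)
      simp only [Function.comp_def] at this
      refine Continuous.aestronglyMeasurable ?_
      simp only [div_eq_mul_inv]
      fun_prop
    · have e := huB k _ hp2 _ (hIoc _ hp1)
      have e' := hPhiB _ e.1 e.2
      rw [abs_mul, abs_of_nonneg e'.1]
      exact mul_le_mul (hCb _ _ (hh0 k)).2 e'.2 e'.1 hC0
    · filter_upwards [hsupp] with k hk p hp
      rw [(hk _ hp).2, zero_mul]
    · filter_upwards [ae_strip s t] with p hp
      by_cases hx : p.2 ∈ Icc a b
      · rw [← Phi_sq (hsol.nonneg p.2 p.1 (ha.trans_le hx.1) (hs.trans hp.1))]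
        exact (hdl p.2).mul
          ((Phi_continuous.tendsto _).comp (hulim _ hx _ (hIoc _ hp)))
      · have e1 : Tendsto (fun k => (φ (p.2 - h k) - φ p.2) / h k) atTop (𝓝 0) :=
          tendsto_const_nhds.congr' (by filter_upwards [hsupp] with k hk using (hk _ hx).2.symm)
        have e2 := tendsto_nhds_unique e1 (hdl p.2)
        rw [← e2, zero_mul]
        refine tendsto_const_nhds.congr' ?_
        filter_upwards [hsupp] with k hk
        rw [(hk _ hx).2, zero_mul]
  -- At the fixed step `H` the dissipation passes to the limit, as `√(u k + η)` tends to `n`.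
  have hsub : ∀ x ∈ Icc a' b', x ∈ Icc a b := fun x hx => by
    by_contra hxn
    have : φ x = 0 := h0 x fun hx' => hxn ⟨by linarith [hx'.1], by linarith [hx'.2]⟩
    rw [h1 x hx] at this
    exact one_ne_zero this
  have hgc : ∀ k, Continuous fun p : ℝ × ℝ =>
      (fun x τ => √(u k x τ + 1 / ((k:ℝ) + 1))) p.1 p.2 := fun k => by
    have := huc k
    fun_prop
  have hglim : ∀ x ∈ Icc a b, ∀ τ ∈ Icc (s / 2) t,
      Tendsto (fun k : ℕ => √(u k x τ + 1 / ((k:ℝ) + 1))) atTop (𝓝 (n x τ)) := by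
    intro x hx τ hτ
    have hn := hsol.nonneg x τ (ha.trans_le hx.1) (lt_of_lt_of_le (by positivity) hτ.1)
    have := (hulim x hx τ hτ).add hηlim
    rw [add_zero] at this
    have := (Real.continuous_sqrt.tendsto _).comp this
    rw [Real.sqrt_sq hn] at this
    exact this
  have L3 : Tendsto (fun k => ∫ p, (Icc a' (b' - H)).indicator (fun x => x ^ 2 *
      ((√(u k (x + H) p.1 + 1 / ((k:ℝ) + 1)) - √(u k x p.1 + 1 / ((k:ℝ) + 1))) / H) ^ 2) p.2
      ∂stripMeas s t) atTop (𝓝 (∫ p, (Icc a' (b' - H)).indicator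
        (fun x => x ^ 2 * ((n (x + H) p.1 - n x p.1) / H) ^ 2) p.2 ∂stripMeas s t)) := by
    refine strip_tendsto (a := a') (b := b' - H) (B := b' ^ 2 * (√(B + 1) / H) ^ 2) (fun k => ?_)
      (Eventually.of_forall fun k p hp1 hp2 => ?_) (Eventually.of_forall fun k p hp => ?_) ?_
    · have c1 := continuous_comp₂ (u := fun x τ => √(u k x τ + 1 / ((k:ℝ) + 1))) (hgc k)
        continuous_snd (continuous_fst (X := ℝ))
      have c2 := continuous_comp₂ (u := fun x τ => √(u k x τ + 1 / ((k:ℝ) + 1))) (hgc k) ((continuous_snd (Y := ℝ)).add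
        (continuous_const (y := H))) (continuous_fst (X := ℝ))
      have c3 : Continuous fun p : ℝ × ℝ => p.2 ^ 2 * ((√(u k (p.2 + H) p.1 + 1 / ((k:ℝ) + 1))
          - √(u k p.2 p.1 + 1 / ((k:ℝ) + 1))) / H) ^ 2 := by
        simp only [div_eq_mul_inv] at c1 c2 ⊢
        exact (continuous_snd.pow 2).mul (((c2.sub c1).mul continuous_const).pow 2)
      exact c3.aestronglyMeasurable.indicator (measurable_snd measurableSet_Icc)
    · rw [indicator_of_mem hp2, abs_of_nonneg (by positivity)]
      have hx1 := hsub p.2 ⟨hp2.1, by linarith [hp2.2]⟩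
      have hx2 := hsub (p.2 + H) ⟨by linarith [hp2.1], by linarith [hp2.2]⟩
      have hx0 : 0 < p.2 := ha'.trans_le hp2.1
      have e1 := huB k _ hx1 _ (hIoc _ hp1)
      have e2 := huB k _ hx2 _ (hIoc _ hp1)
      have f1 : √(u k p.2 p.1 + 1 / ((k:ℝ) + 1)) ≤ √(B + 1) :=
        Real.sqrt_le_sqrt (by linarith [hη1 k])
      have f2 : √(u k (p.2 + H) p.1 + 1 / ((k:ℝ) + 1)) ≤ √(B + 1) :=
        Real.sqrt_le_sqrt (by linarith [hη1 k])
      rw [← sq_abs ((_ - _) / H), abs_div, abs_of_pos hH]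
      have f3 : |√(u k (p.2 + H) p.1 + 1 / ((k:ℝ) + 1)) - √(u k p.2 p.1 + 1 / ((k:ℝ) + 1))|
          ≤ √(B + 1) := by
        rw [abs_le]
        constructor <;> linarith [Real.sqrt_nonneg (u k p.2 p.1 + 1 / ((k:ℝ) + 1)),
          Real.sqrt_nonneg (u k (p.2 + H) p.1 + 1 / ((k:ℝ) + 1))]
      have f4 : p.2 ≤ b' := by linarith [hp2.2]
      gcongr
    · rw [indicator_of_notMem hp]
    · filter_upwards [ae_strip s t] with p hp
      by_cases hx : p.2 ∈ Icc a' (b' - H)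
      swap
      · simp only [indicator_of_notMem hx]
        exact tendsto_const_nhds
      simp only [indicator_of_mem hx]
      have hx1 := hsub p.2 ⟨hx.1, by linarith [hx.2]⟩
      have hx2 := hsub (p.2 + H) ⟨by linarith [hx.1], by linarith [hx.2]⟩
      exact ((((hglim _ hx2 _ (hIoc _ hp)).sub (hglim _ hx1 _ (hIoc _ hp))).div_const H).pow
        2).const_mul _
  -- The time averages of `time_lower` converge because `n` is jointly continuous; clamping makes
  -- it so on the whole plane.
  set w : ℝ → ℝ → ℝ := fun x τ => clampN n a b (s / 2) t x τ ^ 2 with hw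
  have hwc : Continuous fun p : ℝ × ℝ => w p.1 p.2 :=
    (clampN_continuous hsol ha (by positivity)).pow 2
  have hwn : ∀ x ∈ Icc a b, ∀ τ ∈ Icc (s / 2) t, w x τ = n x τ ^ 2 := fun x hx τ hτ => by
    simp only [hw]
    rw [clampN_eq n hx hτ]
  have hNc := slice_continuous hφc h0 hwc
  have hNn : ∀ τ ∈ Icc (s / 2) t, ∫ x, φ x * w x τ = ∫ x, φ x * n x τ ^ 2 := fun τ hτ => by
    congr 1
    ext x
    by_cases hx : x ∈ Icc α β
    · rw [hwn x ⟨by linarith [hx.1], by linarith [hx.2]⟩ τ hτ]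
    · simp [h0 x hx]
  have L4 := (((tendsto_left_average hNc t).comp hhlim).sub
    ((tendsto_left_average hNc s).comp hhlim)).sub (hηlim.mul_const (∫ x, φ x))
  rw [zero_mul, sub_zero, hNn t ⟨by linarith, le_rfl⟩, hNn s ⟨by linarith, hst.le⟩] at L4
  have L5 : Tendsto (fun k : ℕ => ∫ p, φ p.2 * ((4 * M ^ 2 / a ^ 2 + 4 * b) * (1 / ((k:ℝ) + 1)))
      ∂stripMeas s t + 1 / ((k:ℝ) + 1)) atTop (𝓝 0) := by
    have e : ∀ k : ℕ, ∫ p, φ p.2 * ((4 * M ^ 2 / a ^ 2 + 4 * b) * (1 / ((k:ℝ) + 1))) ∂stripMeas s t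
        = (∫ p, φ p.2 ∂stripMeas s t) * ((4 * M ^ 2 / a ^ 2 + 4 * b) * (1 / ((k:ℝ) + 1))) :=
      fun k => integral_mul_const _ _
    simp only [e]
    simpa using ((hηlim.const_mul (4 * M ^ 2 / a ^ 2 + 4 * b)).const_mul
      (∫ p, φ p.2 ∂stripMeas s t)).add hηlim
  have L6 := ((L1.add L2).sub L4).add L5
  refine (le_of_tendsto_of_tendsto L3 L6 ?_).trans (by linarith)
  filter_upwards [hhsmall (s / 2) (by positivity)] with k hk
  have k1 := hm k
  rw [defect_by_parts hφc h0 (huc k)] at k1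
  have k2 := coarse_le_fine (g := fun x τ => √(u k x τ + 1 / ((k:ℝ) + 1))) (s := s) (t := t)
      hφc hφ0 h0 ha' h1 hH (hgc k) (m k)
  have k3 := time_lower (η := 1 / ((k:ℝ) + 1)) hφc hφ0 h0 hst (hh0 k) hk.le (huc k) hwc
    (fun x hx τ hτ => by
      have hx' : x ∈ Icc a b := ⟨by linarith [hx.1], by linarith [hx.2]⟩
      rw [hwn x hx' τ hτ]
      exact hclose k x hx' τ hτ)
  simp only [Function.comp_apply]
  simp only [hh] at k3 ⊢
  linarith only [k1, k2, k3]

/-! ### Cutoff functions -/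

/-- A smooth monotone transition `χ` from `0` to `1` on `[1, 2]`, with its first two derivatives and
bounds that are invariant under dilation. -/
lemma exists_transition : ∃ (χ χ₁ χ₂ : ℝ → ℝ) (C : ℝ), ContDiff ℝ 2 χ ∧
    (∀ y, HasDerivAt χ (χ₁ y) y) ∧ (∀ y, HasDerivAt χ₁ (χ₂ y) y) ∧ Continuous χ₂ ∧
    (∀ y ≤ 1, χ y = 0) ∧ (∀ y, 2 ≤ y → χ y = 1) ∧ Monotone χ ∧ (∀ y, 0 ≤ χ₁ y) ∧
    (∀ y, y ∉ Icc (1:ℝ) 2 → χ₁ y = 0 ∧ χ₂ y = 0) ∧ 0 ≤ C ∧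
    (∀ y, |χ₁ y| ≤ C ∧ |y * χ₁ y| ≤ C ∧ |y ^ 2 * χ₂ y| ≤ C) := by
  set χ : ℝ → ℝ := fun y => Real.smoothTransition (y - 1) with hχ
  have hs : ContDiff ℝ 3 χ := Real.smoothTransition.contDiff.comp (by fun_prop)
  have hs1 : ContDiff ℝ 2 (deriv χ) :=
    ((contDiff_succ_iff_deriv (n := 2) (f := χ)).1 (by norm_num; exact hs)).2.2
  have hs2 : ContDiff ℝ 1 (deriv (deriv χ)) :=
    ((contDiff_succ_iff_deriv (n := 1) (f := deriv χ)).1 (by norm_num; exact hs1)).2.2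
  have c1 := hs1.continuous
  have c2 := hs2.continuous
  have hmono : Monotone χ := fun y z hyz => Real.smoothTransition.monotone (by linarith)
  have z0 : ∀ y ≤ 1, χ y = 0 := fun y hy =>
    Real.smoothTransition.zero_of_nonpos (by linarith)
  have z1 : ∀ y, 2 ≤ y → χ y = 1 := fun y hy =>
    Real.smoothTransition.one_of_one_le (by linarith)
  have hloc : ∀ y, y ∉ Icc (1:ℝ) 2 → ∃ c, χ =ᶠ[𝓝 y] fun _ => c := by
    intro y hy
    rcases lt_or_ge y 1 with h | h
    · exact ⟨0, by filter_upwards [Iio_mem_nhds h] with z hz using z0 z (le_of_lt hz)⟩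
    · have h2 : 2 < y := by
        by_contra hn
        exact hy ⟨h, not_lt.1 hn⟩
      exact ⟨1, by filter_upwards [Ioi_mem_nhds h2] with z hz using z1 z (le_of_lt hz)⟩
  have hz : ∀ y, y ∉ Icc (1:ℝ) 2 → deriv χ y = 0 ∧ deriv (deriv χ) y = 0 := by
    intro y hy
    obtain ⟨c, hc⟩ := hloc y hy
    constructor
    · rw [hc.deriv_eq, deriv_const]
    · rw [hc.deriv.deriv_eq]
      simp
  have bd : ∀ f : ℝ → ℝ, Continuous f → (∀ y, y ∉ Icc (1:ℝ) 2 → f y = 0) →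
      ∃ C, ∀ y, |f y| ≤ C := fun f hf h0 =>
    (hasCompactSupport_of_zero_off h0).exists_bound_of_continuous hf
  obtain ⟨C1, h1⟩ := bd (deriv χ) c1 fun y hy => (hz y hy).1
  obtain ⟨C2, h2⟩ := bd (fun y => y * deriv χ y) (by fun_prop) fun y hy => by simp [(hz y hy).1]
  obtain ⟨C3, h3⟩ := bd (fun y => y ^ 2 * deriv (deriv χ) y) (by fun_prop)
    fun y hy => by simp [(hz y hy).2]
  refine ⟨χ, deriv χ, deriv (deriv χ), max C1 (max C2 C3), hs.of_le (by norm_num), fun y =>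
    (hs.differentiable (by norm_num) y).hasDerivAt, fun y =>
    (hs1.differentiable (by norm_num) y).hasDerivAt, c2, z0, z1, hmono,
    fun y => hmono.deriv_nonneg, hz, ?_, fun y => ⟨?_, ?_, ?_⟩⟩
  · exact ((abs_nonneg _).trans (h1 0)).trans (le_max_left _ _)
  · exact (h1 y).trans (le_max_left _ _)
  · exact (h2 y).trans ((le_max_left _ _).trans (le_max_right _ _))
  · exact (h3 y).trans ((le_max_right _ _).trans (le_max_right _ _))

lemma qLim_eq {φ φ₁ φ₂ : ℝ → ℝ} (h1 : ∀ x, HasDerivAt φ (φ₁ x) x)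
    (h2 : ∀ x, HasDerivAt φ₁ (φ₂ x) x) (x : ℝ) :
    qLim φ x = (2 * x - 2) * φ x + (4 - x) * (x * φ₁ x) + x ^ 2 * φ₂ x := by
  have hsq : ∀ x : ℝ, HasDerivAt (fun y : ℝ => y ^ 2) (2 * x) x := fun x => by
    simpa using hasDerivAt_pow 2 x
  have e1 : deriv (fun y => y ^ 2 * φ y) = fun y => 2 * y * φ y + y ^ 2 * φ₁ y :=
    funext fun y => ((hsq y).fun_mul (h1 y)).deriv
  have e2 : HasDerivAt (fun y => 2 * y * φ y + y ^ 2 * φ₁ y)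
      (2 * φ x + 2 * x * φ₁ x + (2 * x * φ₁ x + x ^ 2 * φ₂ x)) x := by
    have h3 : HasDerivAt (fun y : ℝ => 2 * y) 2 x := by
      simpa using (hasDerivAt_id' x).const_mul 2
    exact (h3.fun_mul (h1 x)).fun_add ((hsq x).fun_mul (h2 x))
  unfold qLim
  rw [e1, e2.deriv]
  ring

/-- Cutoffs `φ k` that vanish off `[1/(k+2), 2(k+2)]`, equal `1` on `[2/(k+2), k+2]`, and scale so
that `x φ'` and `x² φ''` stay bounded; `φ'` is almost nonnegative, as the cutoff descends only on
the large scale `k+2`. -/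
lemma exists_cutoffs : ∃ (C : ℝ) (φ : ℕ → ℝ → ℝ), 0 ≤ C ∧
    (∀ k, ContDiff ℝ 2 (φ k)) ∧ (∀ k x, 0 ≤ φ k x ∧ φ k x ≤ 1) ∧
    (∀ (k : ℕ) x, x ∉ Icc (1 / ((k:ℝ) + 2)) (2 * ((k:ℝ) + 2)) → φ k x = 0) ∧
    (∀ (k : ℕ), ∀ x ∈ Icc (2 / ((k:ℝ) + 2)) ((k:ℝ) + 2), φ k x = 1) ∧
    (∀ k x, x ≤ 0 → qLim (φ k) x = 0 ∧ deriv (φ k) x = 0) ∧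
    (∀ k x, 0 < x → |qLim (φ k) x| ≤ C * (1 + x)) ∧
    (∀ (k : ℕ) x, 0 < x → -deriv (φ k) x ≤ C / ((k:ℝ) + 2)) ∧
    (∀ k, Continuous (qLim (φ k)) ∧ Continuous (deriv (φ k))) ∧
    (∀ k, ∃ D, ∀ x, |deriv (φ k) x| ≤ D) ∧
    (∀ x, 0 < x → Tendsto (fun k => qLim (φ k) x) atTop (𝓝 (2 * x - 2))) ∧
    (∀ x, 0 < x → Tendsto (fun k => φ k x) atTop (𝓝 1)) := by
  obtain ⟨χ, χ₁, χ₂, C, hχ, d1, d2, c2, z0, z1, hmono, hpos, hz, hC, hb⟩ := exists_transition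
  have c1 : Continuous χ₁ := continuous_iff_continuousAt.2 fun y => (d2 y).continuousAt
  have c0 : Continuous χ := hχ.continuous
  have χ0 : ∀ y, 0 ≤ χ y := fun y => by
    rcases le_total y 1 with h | h
    · exact (z0 y h).ge
    · rw [← z0 1 le_rfl]
      exact hmono h
  have χ1 : ∀ y, χ y ≤ 1 := fun y => by
    rcases le_total y 2 with h | h
    · rw [← z1 2 le_rfl]
      exact hmono h
    · exact (z1 y h).le
  set κ : ℕ → ℝ := fun k => (k:ℝ) + 2 with hκ
  have hκ0 : ∀ k, 0 < κ k := fun k => by simp only [hκ]; positivity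
  have hκ2 : ∀ k, 2 ≤ κ k := fun k => by
    simp only [hκ]
    linarith [Nat.cast_nonneg (α := ℝ) k]
  set φ : ℕ → ℝ → ℝ := fun k x => χ (κ k * x) - χ (x / κ k) with hφ
  set φ₁ : ℕ → ℝ → ℝ := fun k x => κ k * χ₁ (κ k * x) - χ₁ (x / κ k) / κ k with hφ₁
  set φ₂ : ℕ → ℝ → ℝ := fun k x => κ k ^ 2 * χ₂ (κ k * x) - χ₂ (x / κ k) / κ k ^ 2 with hφ₂
  have sc : ∀ {f f' : ℝ → ℝ}, (∀ y, HasDerivAt f (f' y) y) → ∀ k x,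
      HasDerivAt (fun x => f (κ k * x)) (κ k * f' (κ k * x)) x ∧
      HasDerivAt (fun x => f (x / κ k)) (f' (x / κ k) / κ k) x := by
    intro f f' h k x
    have g1 : HasDerivAt (fun x => κ k * x) (κ k) x := by
      simpa using (hasDerivAt_id' x).const_mul (κ k)
    have g2 : HasDerivAt (fun x => x / κ k) (1 / κ k) x := (hasDerivAt_id' x).div_const (κ k)
    constructor
    · have := (h (κ k * x)).comp x g1
      rw [mul_comm] at this
      exact this
    · have := (h (x / κ k)).comp x g2
      rw [mul_one_div] at this
      exact this
  have D1 : ∀ k x, HasDerivAt (φ k) (φ₁ k x) x := fun k x => (sc d1 k x).1.sub (sc d1 k x).2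
  have D2 : ∀ k x, HasDerivAt (φ₁ k) (φ₂ k x) x := fun k x => by
    have e1 := ((sc d2 k x).1.const_mul (κ k)).sub ((sc d2 k x).2.div_const (κ k))
    rw [← mul_assoc, ← pow_two, div_div, ← pow_two] at e1
    exact e1
  have hder : ∀ k, deriv (φ k) = φ₁ k := fun k => funext fun x => (D1 k x).deriv
  have hq : ∀ k x, qLim (φ k) x
      = (2 * x - 2) * φ k x + (4 - x) * (x * φ₁ k x) + x ^ 2 * φ₂ k x := fun k x =>
    qLim_eq (D1 k) (D2 k) x
  have r1 : ∀ k x, x * φ₁ k x = κ k * x * χ₁ (κ k * x) - x / κ k * χ₁ (x / κ k) := fun k x => by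
    simp only [hφ₁]
    ring
  have r2 : ∀ k x, x ^ 2 * φ₂ k x
      = (κ k * x) ^ 2 * χ₂ (κ k * x) - (x / κ k) ^ 2 * χ₂ (x / κ k) := fun k x => by
    simp only [hφ₂]
    field_simp
  have b1 : ∀ k x, |x * φ₁ k x| ≤ 2 * C := fun k x => by
    rw [r1]
    have := abs_sub (κ k * x * χ₁ (κ k * x)) (x / κ k * χ₁ (x / κ k))
    linarith [(hb (κ k * x)).2.1, (hb (x / κ k)).2.1]
  have b2 : ∀ k x, |x ^ 2 * φ₂ k x| ≤ 2 * C := fun k x => by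
    rw [r2]
    have := abs_sub ((κ k * x) ^ 2 * χ₂ (κ k * x)) ((x / κ k) ^ 2 * χ₂ (x / κ k))
    linarith [(hb (κ k * x)).2.2, (hb (x / κ k)).2.2]
  have hord : ∀ k x, 0 ≤ x → x / κ k ≤ κ k * x := fun k x hx => by
    rw [div_le_iff₀ (hκ0 k)]
    nlinarith [hκ2 k, mul_nonneg hx (by nlinarith [hκ2 k] : 0 ≤ κ k * κ k - 1)]
  have hneg : ∀ k x, x ≤ 0 → φ k x = 0 ∧ φ₁ k x = 0 ∧ φ₂ k x = 0 := fun k x hx => by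
    have e1 : κ k * x ≤ 0 := mul_nonpos_of_nonneg_of_nonpos (hκ0 k).le hx
    have e2 : x / κ k ≤ 0 := div_nonpos_of_nonpos_of_nonneg hx (hκ0 k).le
    have e3 := hz (κ k * x) (fun h => by linarith [h.1])
    have e4 := hz (x / κ k) (fun h => by linarith [h.1])
    refine ⟨?_, ?_, ?_⟩
    · simp only [hφ]
      rw [z0 _ (by linarith), z0 _ (by linarith), sub_zero]
    · simp [hφ₁, e3.1, e4.1]
    · simp [hφ₂, e3.2, e4.2]
  have h01 : ∀ k x, 0 ≤ φ k x ∧ φ k x ≤ 1 := fun k x => by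
    rcases le_total x 0 with h | h
    · rw [(hneg k x h).1]
      exact ⟨le_rfl, zero_le_one⟩
    · exact ⟨sub_nonneg.2 (hmono (hord k x h)), by
        simp only [hφ]
        linarith [χ1 (κ k * x), χ0 (x / κ k)]⟩
  have hev : ∀ x, 0 < x → ∀ᶠ k in atTop, 2 < κ k * x ∧ x / κ k < 1 := fun x hx => by
    have hlim : Tendsto κ atTop atTop :=
      tendsto_atTop_add_const_right _ _ tendsto_natCast_atTop_atTop
    filter_upwards [hlim.eventually_gt_atTop (2 / x), hlim.eventually_gt_atTop x] with k k1 k2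
    exact ⟨(div_lt_iff₀ hx).1 k1, (div_lt_one (hκ0 k)).2 k2⟩
  have hev1 : ∀ x, 0 < x → ∀ᶠ k in atTop, φ k x = 1 ∧ φ₁ k x = 0 ∧ φ₂ k x = 0 := fun x hx => by
    filter_upwards [hev x hx] with k ⟨k1, k2⟩
    have e3 := hz (κ k * x) (fun h => by linarith [h.2])
    have e4 := hz (x / κ k) (fun h => by linarith [h.1])
    refine ⟨?_, ?_, ?_⟩
    · simp only [hφ]
      rw [z1 _ k1.le, z0 _ k2.le, sub_zero]
    · simp [hφ₁, e3.1, e4.1]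
    · simp [hφ₂, e3.2, e4.2]
  have hφc : ∀ k, Continuous (φ k) := fun k => by
    simp only [hφ, div_eq_mul_inv]; fun_prop
  have hφ₁c : ∀ k, Continuous (φ₁ k) := fun k => by
    simp only [hφ₁, div_eq_mul_inv]; fun_prop
  have hφ₂c : ∀ k, Continuous (φ₂ k) := fun k => by
    simp only [hφ₂, div_eq_mul_inv]; fun_prop
  refine ⟨2 + 10 * C, φ, by positivity, ?_, h01, ?_, ?_, ?_, ?_, ?_, ?_, ?_, ?_, ?_⟩
  · intro k
    simp only [hφ, div_eq_mul_inv]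
    fun_prop
  · intro k x hx
    by_cases h : x ≤ 0
    · exact (hneg k x h).1
    push Not at h
    simp only [hφ]
    by_cases h1 : κ k * x ≤ 1
    · rw [z0 _ h1, z0 _ ((hord k x h.le).trans h1), sub_zero]
    · push Not at h1
      have h2 : 2 * κ k < x := by
        by_contra hn
        exact hx ⟨by rw [div_le_iff₀ (hκ0 k)]; linarith, not_lt.1 hn⟩
      have h3 : 2 ≤ x / κ k := by rw [le_div_iff₀ (hκ0 k)]; exact h2.le
      rw [z1 _ h3, z1 _ (h3.trans (hord k x h.le)), sub_self]
  · intro k x hx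
    have h1 : 2 ≤ κ k * x := by
      have := (div_le_iff₀ (hκ0 k)).1 hx.1
      linarith
    have h2 : x / κ k ≤ 1 := (div_le_one (hκ0 k)).2 hx.2
    simp only [hφ]
    rw [z1 _ h1, z0 _ h2, sub_zero]
  · intro k x hx
    obtain ⟨e1, e2, e3⟩ := hneg k x hx
    rw [hq, hder, e1, e2, e3]
    simp
  · intro k x hx
    rw [hq]
    have e1 := abs_add_three ((2 * x - 2) * φ k x) ((4 - x) * (x * φ₁ k x)) (x ^ 2 * φ₂ k x)
    have e2 : |(2 * x - 2) * φ k x| ≤ 2 * x + 2 := by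
      rw [abs_mul, abs_of_nonneg (h01 k x).1]
      have : |2 * x - 2| ≤ 2 * x + 2 := by rw [abs_le]; constructor <;> linarith
      calc |2 * x - 2| * φ k x ≤ (2 * x + 2) * 1 :=
            mul_le_mul this (h01 k x).2 (h01 k x).1 (by positivity)
        _ = _ := mul_one _
    have e3 : |(4 - x) * (x * φ₁ k x)| ≤ (4 + x) * (2 * C) := by
      rw [abs_mul]
      have : |4 - x| ≤ 4 + x := by rw [abs_le]; constructor <;> linarith
      exact mul_le_mul this (b1 k x) (abs_nonneg _) (by positivity)
    have e4 := b2 k x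
    have e5 : 0 ≤ C * x := by positivity
    linarith only [e1, e2, e3, e4, e5, hC]
  · intro k x hx
    rw [hder, le_div_iff₀ (hκ0 k)]
    simp only [hφ₁]
    have e1 : 0 ≤ κ k * χ₁ (κ k * x) * κ k :=
      mul_nonneg (mul_nonneg (hκ0 k).le (hpos _)) (hκ0 k).le
    have e2 := (abs_le.1 (hb (x / κ k)).1).2
    have e3 : χ₁ (x / κ k) / κ k * κ k = χ₁ (x / κ k) := div_mul_cancel₀ _ (hκ0 k).ne'
    calc -(κ k * χ₁ (κ k * x) - χ₁ (x / κ k) / κ k) * κ k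
        = χ₁ (x / κ k) / κ k * κ k - κ k * χ₁ (κ k * x) * κ k := by ring
      _ ≤ 2 + 10 * C := by rw [e3]; linarith
  · intro k
    rw [hder]
    refine ⟨?_, hφ₁c k⟩
    have e : qLim (φ k) = _ := funext fun x => hq k x
    rw [e]
    have := hφc k
    have := hφ₁c k
    have := hφ₂c k
    fun_prop
  · intro k
    rw [hder]
    refine ⟨κ k * C + C / κ k, fun x => ?_⟩
    simp only [hφ₁]
    refine (abs_sub _ _).trans ?_
    rw [abs_mul, abs_div, abs_of_pos (hκ0 k)]
    have e1 := (hb (κ k * x)).1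
    have e2 := (hb (x / κ k)).1
    have := hκ0 k
    gcongr
  · intro x hx
    refine tendsto_const_nhds.congr' ?_
    filter_upwards [hev1 x hx] with k ⟨e1, e2, e3⟩
    rw [hq, e1, e2, e3]
    ring
  · intro x hx
    refine tendsto_const_nhds.congr' ?_
    filter_upwards [hev1 x hx] with k hk using hk.1.symm

/-! ### Removing the cutoff -/

/-- Lebesgue measure on the half strip `(s, t] × (0, ∞)`, in the variables `p = (τ, x)`. -/
noncomputable def halfMeas (s t : ℝ) : Measure (ℝ × ℝ) :=
  (volume.restrict (Ioc s t)).prod (volume.restrict (Ioi 0))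

lemma halfMeas_eq_strip (s t : ℝ) :
    halfMeas s t = (stripMeas s t).restrict (univ ×ˢ Ioi 0) := by
  rw [stripMeas, ← Measure.prod_restrict, Measure.restrict_univ]
  rfl

lemma halfMeas_eq_volume (s t : ℝ) :
    halfMeas s t = (volume : Measure (ℝ × ℝ)).restrict (Ioc s t ×ˢ Ioi 0) := by
  rw [Measure.volume_eq_prod, ← Measure.prod_restrict]
  rfl

lemma ae_half (s t : ℝ) : ∀ᵐ p ∂halfMeas s t, p.1 ∈ Ioc s t ∧ 0 < p.2 := by
  rw [halfMeas_eq_volume]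
  filter_upwards [ae_restrict_mem (measurableSet_Ioc.prod measurableSet_Ioi)] with p hp
  exact hp

lemma strip_integral_eq_half {s t : ℝ} {F : ℝ × ℝ → ℝ} (h0 : ∀ p : ℝ × ℝ, p.2 ≤ 0 → F p = 0) :
    ∫ p, F p ∂stripMeas s t = ∫ p, F p ∂halfMeas s t := by
  rw [halfMeas_eq_strip]
  refine (setIntegral_eq_integral_of_forall_compl_eq_zero fun p hp => h0 p ?_).symm
  by_contra h
  exact hp ⟨mem_univ _, not_le.1 h⟩

lemma half_aesm {n : ℝ → ℝ → ℝ} {n₀ : ℝ → ℝ} (hsol : IsKompSol n n₀) {s t H : ℝ} (hs : 0 < s)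
    (hH : 0 ≤ H) : AEStronglyMeasurable (fun p : ℝ × ℝ => n (p.2 + H) p.1) (halfMeas s t) := by
  rw [halfMeas_eq_volume]
  refine ContinuousOn.aestronglyMeasurable ?_ (measurableSet_Ioc.prod measurableSet_Ioi)
  refine hsol.contOn.comp (f := fun p : ℝ × ℝ => (p.2 + H, p.1)) (by fun_prop) ?_
  rintro p ⟨h1, h2⟩
  exact ⟨add_pos_of_pos_of_nonneg h2 hH, hs.trans h1.1⟩

/-- The decay hypothesis makes `(1 + x) n²` integrable in `x`, uniformly in time. -/
lemma weight_bound {n : ℝ → ℝ → ℝ} {n₀ : ℝ → ℝ} (hsol : IsKompSol n n₀) {M : ℝ}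
    (hM : ∀ x t : ℝ, 0 < x → 0 < t → n x t ≤ M) {t : ℝ} (ht : 0 < t) :
    ∃ D, ∀ x τ, 0 < x → 0 < τ → τ ≤ t → (1 + x) * n x τ ^ 2 ≤ D * (1 + x ^ 2)⁻¹ := by
  obtain ⟨R, hR0, hR⟩ := hsol.decay (t + 1) (by linarith) 1 one_pos
  refine ⟨4 + (1 + max R 1) * (1 + (max R 1) ^ 2) * M ^ 2, fun x τ hx hτ hτt => ?_⟩
  have hn := hsol.nonneg x τ hx hτ
  have hnM := hM x τ hx hτ
  rw [← div_eq_mul_inv, le_div_iff₀ (by positivity)]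
  rcases le_total (max R 1) x with h | h
  · have h1 : 1 ≤ x := (le_max_right _ _).trans h
    have h2 := (hR x ((le_max_left _ _).trans h) τ hτ.le (by linarith)).le
    have h3 : (x ^ 2 * n x τ) ^ 2 ≤ 1 := pow_le_one₀ (by positivity) h2
    have h4 : (1 + x) * (1 + x ^ 2) ≤ 4 * x ^ 4 := by
      have a1 : 1 + x ≤ 2 * x := by linarith
      have a2 : 1 + x ^ 2 ≤ 2 * x ^ 2 := by nlinarith
      have a3 : x ^ 3 ≤ x ^ 4 := pow_le_pow_right₀ h1 (by norm_num)
      calc (1 + x) * (1 + x ^ 2) ≤ (2 * x) * (2 * x ^ 2) := by gcongr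
        _ = 4 * x ^ 3 := by ring
        _ ≤ _ := by linarith
    have h5 : 0 ≤ (1 + max R 1) * (1 + (max R 1) ^ 2) * M ^ 2 := by positivity
    calc (1 + x) * n x τ ^ 2 * (1 + x ^ 2) = (1 + x) * (1 + x ^ 2) * n x τ ^ 2 := by ring
      _ ≤ 4 * x ^ 4 * n x τ ^ 2 := by gcongr
      _ = 4 * (x ^ 2 * n x τ) ^ 2 := by ring
      _ ≤ _ := by linarith
  · calc (1 + x) * n x τ ^ 2 * (1 + x ^ 2) = (1 + x) * (1 + x ^ 2) * n x τ ^ 2 := by ring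
      _ ≤ (1 + max R 1) * (1 + (max R 1) ^ 2) * M ^ 2 := by gcongr
      _ ≤ _ := by linarith

lemma half_integrable {n : ℝ → ℝ → ℝ} {n₀ : ℝ → ℝ} (hsol : IsKompSol n n₀) {s t : ℝ}
    (hs : 0 < s) (hst : s < t) :
    Integrable (fun p : ℝ × ℝ => (1 + p.2) * n p.2 p.1 ^ 2) (halfMeas s t) := by
  obtain ⟨M, hM⟩ := hsol.bounded
  obtain ⟨D, hD⟩ := weight_bound hsol hM (hs.trans hst)
  have hb : Integrable (fun p : ℝ × ℝ => D * (1 + p.2 ^ 2)⁻¹) (halfMeas s t) :=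
    ((integrable_inv_one_add_sq.const_mul D).restrict (s := Ioi 0)).comp_snd _
  have hm := half_aesm (t := t) hsol hs le_rfl
  simp only [add_zero] at hm
  refine hb.mono' ((by fun_prop : Continuous fun p : ℝ × ℝ => 1 + p.2).aestronglyMeasurable.mul
    (hm.pow 2)) ?_
  filter_upwards [ae_half s t] with p ⟨h1, h2⟩
  rw [Real.norm_of_nonneg (by positivity)]
  exact hD _ _ h2 (hs.trans h1.1) h1.2

lemma half_integrable_of_le {n : ℝ → ℝ → ℝ} {n₀ : ℝ → ℝ} (hsol : IsKompSol n n₀) {s t c : ℝ}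
    (hs : 0 < s) (hst : s < t) {F : ℝ × ℝ → ℝ} (hF : AEStronglyMeasurable F (halfMeas s t))
    (hle : ∀ p : ℝ × ℝ, p.1 ∈ Ioc s t → 0 < p.2 → |F p| ≤ c * ((1 + p.2) * n p.2 p.1 ^ 2)) :
    Integrable F (halfMeas s t) := by
  refine ((half_integrable hsol hs hst).const_mul c).mono' hF ?_
  filter_upwards [ae_half s t] with p ⟨h1, h2⟩ using hle p h1 h2

lemma slice_sq_integrable {n : ℝ → ℝ → ℝ} {n₀ : ℝ → ℝ} (hsol : IsKompSol n n₀) {t : ℝ}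
    (ht : 0 < t) : IntegrableOn (fun x => n x t ^ 2) (Ioi 0) := by
  obtain ⟨M, hM⟩ := hsol.bounded
  obtain ⟨D, hD⟩ := weight_bound hsol hM ht
  have hc : ContinuousOn (fun x => n x t ^ 2) (Ioi 0) := fun x hx =>
    ((hsol.diff_x t ht x hx).continuousAt.pow 2).continuousWithinAt
  refine ((integrable_inv_one_add_sq.const_mul D).restrict (s := Ioi 0)).mono'
    (hc.aestronglyMeasurable measurableSet_Ioi) ?_
  filter_upwards [ae_restrict_mem measurableSet_Ioi] with x hx
  have hx0 : 0 < x := hx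
  rw [Real.norm_of_nonneg (by positivity)]
  refine le_trans ?_ (hD x t hx ht le_rfl)
  nlinarith [mul_nonneg hx0.le (sq_nonneg (n x t))]

lemma slice_tendsto {n : ℝ → ℝ → ℝ} {n₀ : ℝ → ℝ} (hsol : IsKompSol n n₀) {t : ℝ}
    (ht : 0 < t) {φ : ℕ → ℝ → ℝ} (hφ : ∀ k, Continuous (φ k))
    (h01 : ∀ k x, 0 ≤ φ k x ∧ φ k x ≤ 1) (h0 : ∀ k x, x ≤ 0 → φ k x = 0)
    (hlim : ∀ x, 0 < x → Tendsto (fun k => φ k x) atTop (𝓝 1)) :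
    Tendsto (fun k => ∫ x, φ k x * n x t ^ 2) atTop (𝓝 (∫ x in Ioi (0:ℝ), n x t ^ 2)) := by
  have hi := slice_sq_integrable hsol ht
  have e : ∀ k, ∫ x, φ k x * n x t ^ 2 = ∫ x in Ioi (0:ℝ), φ k x * n x t ^ 2 := fun k =>
    (setIntegral_eq_integral_of_forall_compl_eq_zero fun x hx => by
      rw [h0 k x (not_lt.1 hx), zero_mul]).symm
  simp only [e]
  refine tendsto_integral_of_dominated_convergence (fun x => n x t ^ 2)
    (fun k => (hφ k).aestronglyMeasurable.mul hi.1) hi (fun k => ?_) ?_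
  · refine Eventually.of_forall fun x => ?_
    rw [Real.norm_of_nonneg (mul_nonneg (h01 k x).1 (sq_nonneg _))]
    exact mul_le_of_le_one_left (sq_nonneg _) (h01 k x).2
  · filter_upwards [ae_restrict_mem measurableSet_Ioi] with x hx
    simpa using (hlim x hx).mul_const (n x t ^ 2)

/-- Fatou's lemma: nonnegative integrable functions converging a.e. whose integrals are bounded by
a convergent sequence have an integrable limit, whose integral is at most the limit of the bounds. -/
lemma fatou_bound {X : Type*} [MeasurableSpace X] {μ : Measure X} {f : ℕ → X → ℝ} {g : X → ℝ}
    {q : ℕ → ℝ} {Q : ℝ} (hf : ∀ k, Integrable (f k) μ) (hf0 : ∀ k x, 0 ≤ f k x)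
    (hlim : ∀ᵐ x ∂μ, Tendsto (fun k => f k x) atTop (𝓝 (g x)))
    (hle : ∀ k, ∫ x, f k x ∂μ ≤ q k) (hq : Tendsto q atTop (𝓝 Q)) :
    Integrable g μ ∧ ∫ x, g x ∂μ ≤ Q := by
  have hQ : 0 ≤ Q := ge_of_tendsto' hq fun k => (integral_nonneg (hf0 k)).trans (hle k)
  have hg : AEStronglyMeasurable g μ :=
    aestronglyMeasurable_of_tendsto_ae atTop (fun k => (hf k).1) hlim
  have hg0 : 0 ≤ᵐ[μ] g := by
    filter_upwards [hlim] with x hx using ge_of_tendsto' hx fun k => hf0 k x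
  have key : ∫⁻ x, ENNReal.ofReal (g x) ∂μ ≤ ENNReal.ofReal Q := by
    calc ∫⁻ x, ENNReal.ofReal (g x) ∂μ
        = ∫⁻ x, liminf (fun k => ENNReal.ofReal (f k x)) atTop ∂μ := by
          refine lintegral_congr_ae ?_
          filter_upwards [hlim] with x hx
          exact ((ENNReal.continuous_ofReal.tendsto _).comp hx).liminf_eq.symm
      _ ≤ liminf (fun k => ∫⁻ x, ENNReal.ofReal (f k x) ∂μ) atTop :=
          lintegral_liminf_le' fun k => (hf k).1.aemeasurable.ennreal_ofReal
      _ ≤ liminf (fun k => ENNReal.ofReal (q k)) atTop := by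
          refine liminf_le_liminf (Eventually.of_forall fun k => ?_)
          rw [← ofReal_integral_eq_lintegral_ofReal (hf k) (Eventually.of_forall (hf0 k))]
          exact ENNReal.ofReal_le_ofReal (hle k)
      _ = ENNReal.ofReal Q := ((ENNReal.continuous_ofReal.tendsto _).comp hq).liminf_eq
  refine ⟨(lintegral_ofReal_ne_top_iff_integrable hg hg0).1
    (key.trans_lt ENNReal.ofReal_lt_top).ne, ?_⟩
  rw [integral_eq_lintegral_of_nonneg_ae hg0 hg]
  exact ENNReal.toReal_le_of_le_ofReal hQ key

/-- The energy inequality on the whole half line, obtained from `cutoff_ineq` with the cutoffs of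
`exists_cutoffs` and step `1/(k+2)` by letting `k → ∞`. The weight `2x - 2` of `n²` is what the
equation gives; it is stronger than the weight `2x - 1` required. -/
lemma energy_half {n : ℝ → ℝ → ℝ} {n₀ : ℝ → ℝ} (hsol : IsKompSol n n₀) {s t : ℝ}
    (hs : 0 < s) (hst : s < t) :
    Integrable (fun p : ℝ × ℝ => p.2 ^ 2 * deriv (fun y => n y p.1) p.2 ^ 2) (halfMeas s t) ∧
    ∫ p, p.2 ^ 2 * deriv (fun y => n y p.1) p.2 ^ 2 ∂halfMeas s t ≤
      (∫ x in Ioi (0:ℝ), n x s ^ 2) - (∫ x in Ioi (0:ℝ), n x t ^ 2)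
        + ∫ p, (2 * p.2 - 2) * n p.2 p.1 ^ 2 ∂halfMeas s t := by
  obtain ⟨M, hM⟩ := hsol.bounded
  obtain ⟨C, φ, hC, c2, h01, hoff, hone, hneg, hq, hd, hcont, hdb, hqlim, hφlim⟩ := exists_cutoffs
  have ht := hs.trans hst
  have hκ : ∀ k : ℕ, (0:ℝ) < (k:ℝ) + 2 := fun k => by positivity
  have hφ0 : ∀ k x, x ≤ 0 → φ k x = 0 := fun k x hx => hoff k x fun h => by
    have : 0 < 1 / ((k:ℝ) + 2) := by positivity
    linarith [h.1]
  have hm := half_aesm (t := t) hsol hs le_rfl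
  simp only [add_zero] at hm
  have hW := half_integrable hsol hs hst
  have hn0 : ∀ p : ℝ × ℝ, p.1 ∈ Ioc s t → 0 < p.2 → 0 ≤ n p.2 p.1 ∧ n p.2 p.1 ≤ M :=
    fun p h1 h2 => ⟨hsol.nonneg _ _ h2 (hs.trans h1.1), hM _ _ h2 (hs.trans h1.1)⟩
  have hn3 : ∀ p : ℝ × ℝ, p.1 ∈ Ioc s t → 0 < p.2 →
      |4 / 3 * n p.2 p.1 ^ 3| ≤ 4 / 3 * M * ((1 + p.2) * n p.2 p.1 ^ 2) := by
    intro p h1 h2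
    obtain ⟨a1, a2⟩ := hn0 p h1 h2
    have a3 := a1.trans a2
    rw [abs_of_nonneg (by positivity)]
    have a4 : n p.2 p.1 ^ 2 ≤ (1 + p.2) * n p.2 p.1 ^ 2 :=
      le_mul_of_one_le_left (sq_nonneg _) (by linarith)
    calc 4 / 3 * n p.2 p.1 ^ 3 = 4 / 3 * n p.2 p.1 * n p.2 p.1 ^ 2 := by ring
      _ ≤ 4 / 3 * M * ((1 + p.2) * n p.2 p.1 ^ 2) := by gcongr
  have hN3 : Integrable (fun p : ℝ × ℝ => 4 / 3 * n p.2 p.1 ^ 3) (halfMeas s t) :=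
    half_integrable_of_le hsol hs hst ((hm.pow 3).const_mul _) hn3
  -- `f k` is the coarse dissipation term of `cutoff_ineq` with step `1/(k+2)`.
  set f : ℕ → ℝ × ℝ → ℝ := fun k p =>
    (Icc (2 / ((k:ℝ) + 2)) ((k:ℝ) + 2 - 1 / ((k:ℝ) + 2))).indicator
      (fun x => x ^ 2 * ((n (x + 1 / ((k:ℝ) + 2)) p.1 - n x p.1) / (1 / ((k:ℝ) + 2))) ^ 2) p.2
    with hf
  set J : ℝ := ∫ p, 4 / 3 * n p.2 p.1 ^ 3 ∂halfMeas s t with hJ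
  have hzero : ∀ k (p : ℝ × ℝ), p.2 ≤ 0 → f k p = 0 := fun k p hp =>
    indicator_of_notMem (fun h => by
      have : 0 < 2 / ((k:ℝ) + 2) := by positivity
      linarith [h.1]) _
  refine fatou_bound (f := f) (q := fun k => (∫ x, φ k x * n x s ^ 2) - (∫ x, φ k x * n x t ^ 2)
    + (∫ p, qLim (φ k) p.2 * n p.2 p.1 ^ 2 ∂halfMeas s t) + C / ((k:ℝ) + 2) * J)
    (fun k => ?_) (fun k p => ?_) ?_ (fun k => ?_) ?_
  · have hH : (0:ℝ) < 1 / ((k:ℝ) + 2) := by positivity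
    have hb := (strip_bound_integrable s t (2 / ((k:ℝ) + 2)) ((k:ℝ) + 2 - 1 / ((k:ℝ) + 2))
      (((k:ℝ) + 2) ^ 2 * (M / (1 / ((k:ℝ) + 2))) ^ 2)).restrict (s := univ ×ˢ Ioi 0)
    rw [← halfMeas_eq_strip] at hb
    refine hb.mono' ?_ ?_
    · have e : f k = (univ ×ˢ Icc (2 / ((k:ℝ) + 2)) ((k:ℝ) + 2 - 1 / ((k:ℝ) + 2))).indicator
          (fun p : ℝ × ℝ => p.2 ^ 2 *
            ((n (p.2 + 1 / ((k:ℝ) + 2)) p.1 - n p.2 p.1) / (1 / ((k:ℝ) + 2))) ^ 2) := by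
        funext p
        simp only [hf, indicator, mem_prod, mem_univ, true_and]
      rw [e]
      refine AEStronglyMeasurable.indicator ?_ (MeasurableSet.univ.prod measurableSet_Icc)
      refine (by fun_prop : Continuous fun p : ℝ × ℝ => p.2 ^ 2).aestronglyMeasurable.mul ?_
      have := ((half_aesm (t := t) hsol hs hH.le).sub hm).const_mul (1 / ((k:ℝ) + 2))⁻¹
      refine (this.pow 2).congr (Eventually.of_forall fun p => ?_)
      simp [div_eq_mul_inv, mul_comm]
    · filter_upwards [ae_half s t] with p ⟨h1, h2⟩
      simp only [hf, indicator]
      split_ifs with h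
      · rw [Real.norm_of_nonneg (by positivity)]
        obtain ⟨a1, a2⟩ := hn0 p h1 h2
        have a3 := hsol.nonneg (p.2 + 1 / ((k:ℝ) + 2)) p.1 (by positivity) (hs.trans h1.1)
        have a4 := hM (p.2 + 1 / ((k:ℝ) + 2)) p.1 (by positivity) (hs.trans h1.1)
        have a5 : p.2 ^ 2 ≤ ((k:ℝ) + 2) ^ 2 := pow_le_pow_left₀ h2.le (by linarith [h.2]) 2
        have a6 : ((n (p.2 + 1 / ((k:ℝ) + 2)) p.1 - n p.2 p.1) / (1 / ((k:ℝ) + 2))) ^ 2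
            ≤ (M / (1 / ((k:ℝ) + 2))) ^ 2 := by
          have a7 : |n (p.2 + 1 / ((k:ℝ) + 2)) p.1 - n p.2 p.1| ≤ M :=
            abs_le.2 ⟨by linarith, by linarith⟩
          rw [← sq_abs (_ / _), abs_div, abs_of_pos hH]
          gcongr
        exact mul_le_mul a5 a6 (by positivity) (by positivity)
      · simp
  · exact indicator_nonneg (f := fun x => x ^ 2 *
      ((n (x + 1 / ((k:ℝ) + 2)) p.1 - n x p.1) / (1 / ((k:ℝ) + 2))) ^ 2) (fun x _ => by positivity) _
  · filter_upwards [ae_half s t] with p ⟨h1, h2⟩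
    have hlim : Tendsto (fun k : ℕ => (k:ℝ) + 2) atTop atTop :=
      tendsto_atTop_add_const_right _ _ tendsto_natCast_atTop_atTop
    have hH : Tendsto (fun k : ℕ => 1 / ((k:ℝ) + 2)) atTop (𝓝[>] 0) := by
      refine tendsto_nhdsWithin_iff.2 ⟨?_, Eventually.of_forall fun k => ?_⟩
      · exact hlim.const_div_atTop 1
      · have := hκ k
        show 0 < 1 / ((k:ℝ) + 2)
        positivity
    have hd' := (tendsto_fwd_diff (hsol.diff_x p.1 (hs.trans h1.1) p.2 h2).hasDerivAt).comp hH
    refine ((hd'.pow 2).const_mul (p.2 ^ 2)).congr' ?_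
    filter_upwards [hlim.eventually_gt_atTop (2 / p.2), hlim.eventually_gt_atTop (p.2 + 1)]
      with k k1 k2
    simp only [hf]
    rw [indicator_of_mem]
    · rfl
    · refine ⟨?_, ?_⟩
      · rw [div_le_iff₀ (hκ k)]
        have := (div_lt_iff₀ h2).1 k1
        linarith
      · have : 1 / ((k:ℝ) + 2) ≤ 1 := (div_le_one (hκ k)).2 (by linarith [Nat.cast_nonneg (α := ℝ) k])
        linarith
  · have h := cutoff_ineq hsol hM (α := 1 / ((k:ℝ) + 2)) (β := 2 * ((k:ℝ) + 2))
      (a' := 2 / ((k:ℝ) + 2)) (b' := (k:ℝ) + 2) (H := 1 / ((k:ℝ) + 2))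
      (by positivity) hs hst (by positivity) (c2 k) (fun x => (h01 k x).1) (hoff k) (hone k)
      (by positivity)
    rw [strip_integral_eq_half (hzero k),
      strip_integral_eq_half (F := fun p => qLim (φ k) p.2 * n p.2 p.1 ^ 2)
        (fun p hp => by simp [(hneg k p.2 hp).1]),
      strip_integral_eq_half (F := fun p => -deriv (φ k) p.2 * (4 / 3 * n p.2 p.1 ^ 3))
        (fun p hp => by simp [(hneg k p.2 hp).2])] at h
    refine h.trans (add_le_add_right ?_ _)
    obtain ⟨D, hD⟩ := hdb k
    rw [hJ, ← integral_const_mul]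
    refine integral_mono_ae ?_ (hN3.const_mul _) ?_
    · refine hN3.bdd_mul (c := D) ?_ ?_
      · exact ((hcont k).2.comp continuous_snd).neg.aestronglyMeasurable
      · exact Eventually.of_forall fun p => by
          rw [norm_neg]
          exact hD p.2
    · filter_upwards [ae_half s t] with p ⟨h1, h2⟩
      have := (hn0 p h1 h2).1
      exact mul_le_mul_of_nonneg_right (hd k p.2 h2) (by positivity)
  · have hlim : Tendsto (fun k : ℕ => (k:ℝ) + 2) atTop atTop :=
      tendsto_atTop_add_const_right _ _ tendsto_natCast_atTop_atTop
    have l1 := slice_tendsto hsol hs (fun k => (c2 k).continuous) h01 hφ0 hφlim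
    have l2 := slice_tendsto hsol ht (fun k => (c2 k).continuous) h01 hφ0 hφlim
    have l3 : Tendsto (fun k => ∫ p, qLim (φ k) p.2 * n p.2 p.1 ^ 2 ∂halfMeas s t) atTop
        (𝓝 (∫ p, (2 * p.2 - 2) * n p.2 p.1 ^ 2 ∂halfMeas s t)) := by
      refine tendsto_integral_of_dominated_convergence
        (fun p => C * ((1 + p.2) * n p.2 p.1 ^ 2))
        (fun k => ((hcont k).1.comp continuous_snd).aestronglyMeasurable.mul (hm.pow 2))
        (hW.const_mul C) (fun k => ?_) ?_
      · filter_upwards [ae_half s t] with p ⟨h1, h2⟩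
        rw [norm_mul, Real.norm_eq_abs, Real.norm_of_nonneg (sq_nonneg (n p.2 p.1)), ← mul_assoc]
        exact mul_le_mul_of_nonneg_right (hq k p.2 h2) (sq_nonneg _)
      · filter_upwards [ae_half s t] with p ⟨h1, h2⟩
        exact (hqlim p.2 h2).mul_const _
    have l4 : Tendsto (fun k : ℕ => C / ((k:ℝ) + 2) * J) atTop (𝓝 0) := by
      simpa using (hlim.const_div_atTop C).mul_const J
    simpa using ((l1.sub l2).add l3).add l4

theorem l2_energy_estimate
    (n : ℝ → ℝ → ℝ) (n₀ : ℝ → ℝ)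
    (hsol : IsKompSol n n₀)
    (h0nonneg : ∀ x : ℝ, 0 < x → 0 ≤ n₀ x)
    (h0bdd : ∃ C : ℝ, ∀ x : ℝ, 0 < x → n₀ x ≤ C)
    (h0decay : Filter.Tendsto (fun x => x ^ 2 * n₀ x) Filter.atTop (nhds 0))
    :
    ∀ s t : ℝ, 0 < s → s < t →
      (∫ x in Set.Ioi (0:ℝ), n x t ^ 2) +
        (∫ τ in s..t, ∫ x in Set.Ioi (0:ℝ),
          (n x τ ^ 2 + x ^ 2 * deriv (fun y => n y τ) x ^ 2)) ≤
      (∫ x in Set.Ioi (0:ℝ), n x s ^ 2) +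
        2 * ∫ τ in s..t, ∫ x in Set.Ioi (0:ℝ), x * n x τ ^ 2 := by
  intro s t hs hst
  obtain ⟨hf, hE⟩ := energy_half hsol hs hst
  have hm := half_aesm (t := t) hsol hs le_rfl
  simp only [add_zero] at hm
  have hN : Integrable (fun p : ℝ × ℝ => n p.2 p.1 ^ 2) (halfMeas s t) :=
    half_integrable_of_le (c := 1) hsol hs hst (hm.pow 2) fun p _ h2 => by
      rw [abs_of_nonneg (sq_nonneg _), one_mul]
      exact le_mul_of_one_le_left (sq_nonneg _) (by linarith)
  have hX : Integrable (fun p : ℝ × ℝ => p.2 * n p.2 p.1 ^ 2) (halfMeas s t) :=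
    half_integrable_of_le (c := 1) hsol hs hst
      (continuous_snd.aestronglyMeasurable.mul (hm.pow 2)) fun p _ h2 => by
      rw [abs_of_nonneg (by positivity), one_mul]
      exact mul_le_mul_of_nonneg_right (by linarith) (sq_nonneg _)
  have e1 : ∫ τ in s..t, ∫ x in Ioi (0:ℝ), (n x τ ^ 2 + x ^ 2 * deriv (fun y => n y τ) x ^ 2)
      = (∫ p, n p.2 p.1 ^ 2 ∂halfMeas s t)
        + ∫ p, p.2 ^ 2 * deriv (fun y => n y p.1) p.2 ^ 2 ∂halfMeas s t := by
    rw [intervalIntegral.integral_of_le hst.le, ← integral_add hN hf]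
    exact (integral_prod _ (hN.add hf)).symm
  have e2 : ∫ τ in s..t, ∫ x in Ioi (0:ℝ), x * n x τ ^ 2
      = ∫ p, p.2 * n p.2 p.1 ^ 2 ∂halfMeas s t := by
    rw [intervalIntegral.integral_of_le hst.le]
    exact (integral_prod _ hX).symm
  have e3 : ∫ p, (2 * p.2 - 2) * n p.2 p.1 ^ 2 ∂halfMeas s t
      = 2 * (∫ p, p.2 * n p.2 p.1 ^ 2 ∂halfMeas s t)
        - 2 * ∫ p, n p.2 p.1 ^ 2 ∂halfMeas s t := by
    rw [← integral_const_mul, ← integral_const_mul,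
      ← integral_sub (hX.const_mul 2) (hN.const_mul 2)]
    exact integral_congr_ae (Eventually.of_forall fun p => by ring)
  -- The equation in fact gives `∫ n²` with coefficient `2` on the left; one copy is dropped.
  have e4 : 0 ≤ ∫ p, n p.2 p.1 ^ 2 ∂halfMeas s t := integral_nonneg fun p => sq_nonneg _
  rw [e1, e2]
  linarith
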